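/- arXiv:math/0605154 — 5 statements merged into one kernel-verified Lean document; each statement's English description precedes it below -/
import Mathlib

section
/- Let G be a finite simple graph with an odd number 2n+1 of vertices and edge weights in a commutative ring, and let a_1, b_1, a_2, b_2 be distinct vertices such that G is noncrossing with respect to the cyclic sequence (a_1, b_1, a_2, b_2). Then M(G−{a_1})·M(G−{a_2,b_1,b_2}) + M(G−{a_2})·M(G−{a_1,b_1,b_2}) = M(G−{b_1})·M(G−{a_1,a_2,b_2}) + M(G−{b_2})·M(G−{a_1,a_2,b_1}). -/
/-- A perfect matching of the induced subgraph of `G` on the vertex set `s`,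
represented as a set `m` of edges of `G`: every edge of `m` is an edge of `G`
with both endpoints in `s`, and every vertex of `s` lies in exactly one edge of `m`. -/
def IsPMOn {α : Type*} (G : SimpleGraph α) (s : Finset α) (m : Finset (Sym2 α)) : Prop :=
  (∀ e ∈ m, e ∈ G.edgeSet ∧ ∀ v ∈ e, v ∈ s) ∧ ∀ v ∈ s, ∃! e, e ∈ m ∧ v ∈ e

/-- The number of perfect matchings of the induced subgraph of `G` on `s`. -/
noncomputable def pmCount {α : Type*} (G : SimpleGraph α) (s : Finset α) : ℕ :=
  Nat.card {m : Finset (Sym2 α) // IsPMOn G s m}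

open Classical in
/-- The sum, over all perfect matchings of the induced subgraph of `G` on `s`,
of the product of the weights of the edges of the matching. -/
noncomputable def pmSum {α R : Type*} [Fintype α] [DecidableEq α] [CommRing R]
    (G : SimpleGraph α) (w : Sym2 α → R) (s : Finset α) : R :=
  ∑ m ∈ Finset.univ.filter (fun m : Finset (Sym2 α) => IsPMOn G s m), ∏ e ∈ m, w e

/-- There are two vertex-disjoint paths in `G`, one joining `x₁` to `y₁` and one joining
`x₂` to `y₂`, whose internal vertices avoid `S`. -/
def DisjointPaths {α : Type*} (G : SimpleGraph α) (S : Set α) (x₁ y₁ x₂ y₂ : α) : Prop :=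
  ∃ (p : G.Walk x₁ y₁) (q : G.Walk x₂ y₂), p.IsPath ∧ q.IsPath ∧
    (∀ u ∈ p.support, u ∉ q.support) ∧
    (∀ u ∈ p.support, u ≠ x₁ → u ≠ y₁ → u ∉ S) ∧
    (∀ u ∈ q.support, u ≠ x₂ → u ≠ y₂ → u ∉ S)

/-- `G` is noncrossing with respect to the cyclic sequence given by the list `L`:
there are no indices `i < j < k < l` such that `G` contains two vertex-disjoint paths,
one joining `L[i]` to `L[k]` and one joining `L[j]` to `L[l]`, whose internal vertices
avoid the vertices of `L`. -/
def NoncrossingList {α : Type*} (G : SimpleGraph α) (L : List α) : Prop :=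
  ∀ i j k l : Fin L.length, i < j → j < k → k < l →
    ¬ DisjointPaths G {x | x ∈ L} (L.get i) (L.get k) (L.get j) (L.get l)

/-- `U, W` form a bipartition of the vertices of `G`. -/
def IsBipartition {α : Type*} [Fintype α] [DecidableEq α]
    (G : SimpleGraph α) (U W : Finset α) : Prop :=
  Disjoint U W ∧ U ∪ W = Finset.univ ∧
    ∀ ⦃x y⦄, G.Adj x y → ((x ∈ U ∧ y ∈ W) ∨ (x ∈ W ∧ y ∈ U))

/-- `P` is an `MH`-alternating path, where `MH` is the unique perfect matching of the
induced subgraph of `G` on the vertex set `sH`: `P` is a (nontrivial) path, among any two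
consecutive edges of `P` exactly one lies in `MH`, and for each endpoint the incident edge
of `P` lies in `MH` iff the endpoint belongs to `sH`. -/
def IsAltPath {α : Type*} (G : SimpleGraph α) (sH : Finset α) (MH : Finset (Sym2 α))
    {x y : α} (P : G.Walk x y) : Prop :=
  P.IsPath ∧ P.edges ≠ [] ∧
  P.edges.Chain' (fun e f => e ∈ MH ↔ f ∉ MH) ∧
  (∀ e ∈ P.edges.head?, (e ∈ MH ↔ x ∈ sH)) ∧
  (∀ e ∈ P.edges.getLast?, (e ∈ MH ↔ y ∈ sH))

/-- A family of pairwise vertex-disjoint `MH`-alternating paths in `G` whose set of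
path-endpoints is exactly `A`, each vertex of `A` being an endpoint of exactly one
path of the family. -/
def IsAltPathNest {α : Type*} (G : SimpleGraph α) (sH : Finset α) (MH : Finset (Sym2 α))
    (A : Finset α) (F : Finset (Σ x : α, Σ y : α, G.Walk x y)) : Prop :=
  (∀ p ∈ F, IsAltPath G sH MH p.2.2) ∧
  (∀ p ∈ F, ∀ q ∈ F, p ≠ q → ∀ u ∈ p.2.2.support, u ∉ q.2.2.support) ∧
  (∀ p ∈ F, p.1 ∈ A ∧ p.2.1 ∈ A) ∧
  (∀ v ∈ A, ∃! p, p ∈ F ∧ (v = p.1 ∨ v = p.2.1))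

/-- A 1-factor on `{1, …, n}`: a partition of `Fin n` into pairs, each pair recorded
as an ordered pair `(i, j)` with `i < j`. -/
def IsOneFactor (n : ℕ) (F : Finset (Fin n × Fin n)) : Prop :=
  (∀ p ∈ F, p.1 < p.2) ∧ ∀ v : Fin n, ∃! p, p ∈ F ∧ (v = p.1 ∨ v = p.2)

/-- The crossing number of a 1-factor: the number of pairs of pairs
`(i,j), (k,l)` in `F` with `i < k < j < l`. -/
def crossingNumber (n : ℕ) (F : Finset (Fin n × Fin n)) : ℕ :=
  ((F ×ˢ F).filter (fun q => q.1.1 < q.2.1 ∧ q.2.1 < q.1.2 ∧ q.1.2 < q.2.2)).card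

open Classical in
/-- all vertices of an edge with one endpoint in C are in C -/
def CEClosed {α : Type*} (C : Finset α) (m : Finset (Sym2 α)) : Prop :=
  ∀ e ∈ m, ∀ u ∈ e, ∀ v ∈ e, u ∈ C → v ∈ C

open Classical in
noncomputable def CESw {α : Type*} (C : Finset α) (m₁ m₂ : Finset (Sym2 α)) : Finset (Sym2 α) :=
  m₁.filter (fun e => ¬ ∃ v ∈ e, v ∈ C) ∪ m₂.filter (fun e => ∃ v ∈ e, v ∈ C)

def CEH {α : Type*} [DecidableEq α] (m₁ m₂ : Finset (Sym2 α)) : SimpleGraph α :=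
  SimpleGraph.fromEdgeSet (↑(m₁ ∪ m₂))

open Classical in
noncomputable def CEC {α : Type*} [Fintype α] [DecidableEq α] (x : α)
    (m₁ m₂ : Finset (Sym2 α)) : Finset α :=
  Finset.univ.filter (fun v => (CEH m₁ m₂).Reachable x v)

open Classical in
noncomputable def CEF {α : Type*} (C : Finset α) (m : Finset (Sym2 α)) : Finset (Sym2 α) :=
  m.filter (fun e => ∃ v ∈ e, v ∈ C)

lemma ce_mem_F {α : Type*} {C : Finset α} {m : Finset (Sym2 α)} {e : Sym2 α} :
    e ∈ CEF C m ↔ e ∈ m ∧ ∃ v ∈ e, v ∈ C := by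
  simp [CEF]

lemma ce_card {α : Type*} {G : SimpleGraph α} {s : Finset α} {m : Finset (Sym2 α)}
    (h : IsPMOn G s m) : s.card = 2 * m.card := by
  classical
  have h1 := Finset.sum_card_bipartiteAbove_eq_sum_card_bipartiteBelow
    (s := s) (t := m) (fun v e => v ∈ e)
  have h2 : ∑ v ∈ s, (Finset.bipartiteAbove (fun v e => v ∈ e) m v).card = ∑ v ∈ s, 1 := by
    apply Finset.sum_congr rfl
    intro v hv
    obtain ⟨e, he, hu⟩ := h.2 v hv
    rw [Finset.card_eq_one]
    refine ⟨e, ?_⟩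
    ext f
    simp only [Finset.mem_bipartiteAbove, Finset.mem_singleton]
    constructor
    · intro hf; exact hu f hf
    · rintro rfl; exact he
  have h3 : ∑ e ∈ m, (Finset.bipartiteBelow (fun v e => v ∈ e) s e).card = ∑ e ∈ m, 2 := by
    apply Finset.sum_congr rfl
    intro e he
    obtain ⟨hG, hs⟩ := h.1 e he
    induction e using Sym2.ind with
    | _ u v =>
      have huv : u ≠ v := by
        rw [SimpleGraph.mem_edgeSet] at hG; exact hG.ne
      rw [Finset.card_eq_two]
      refine ⟨u, v, huv, ?_⟩
      ext t
      simp only [Finset.mem_bipartiteBelow, Finset.mem_insert, Finset.mem_singleton, Sym2.mem_iff]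
      constructor
      · exact fun h => h.2
      · intro ht
        refine ⟨hs t (by simpa using ht), ht⟩
  rw [h2, h3] at h1
  simp at h1
  omega

open Classical in
lemma ce_restrict {α : Type*} [DecidableEq α] {G : SimpleGraph α} {s C : Finset α}
    {m : Finset (Sym2 α)} (h : IsPMOn G s m) (hC : CEClosed C m) :
    IsPMOn G (s ∩ C) (CEF C m) := by
  constructor
  · intro e he
    rw [ce_mem_F] at he
    obtain ⟨he, u, hu, huC⟩ := he
    refine ⟨(h.1 e he).1, fun v hv => ?_⟩
    rw [Finset.mem_inter]
    exact ⟨(h.1 e he).2 v hv, hC e he u hu v hv huC⟩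
  · intro v hv
    rw [Finset.mem_inter] at hv
    obtain ⟨e, he, hu⟩ := h.2 v hv.1
    refine ⟨e, ⟨ce_mem_F.2 ⟨he.1, v, he.2, hv.2⟩, he.2⟩, ?_⟩
    rintro f ⟨hf, hvf⟩
    exact hu f ⟨(ce_mem_F.1 hf).1, hvf⟩

lemma ce_sw {α : Type*} [DecidableEq α] {G : SimpleGraph α} {s₁ s₂ C : Finset α}
    {m₁ m₂ : Finset (Sym2 α)} (h₁ : IsPMOn G s₁ m₁) (h₂ : IsPMOn G s₂ m₂)
    (hC₁ : CEClosed C m₁) (hC₂ : CEClosed C m₂) :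
    IsPMOn G ((s₁ \ C) ∪ (s₂ ∩ C)) (CESw C m₁ m₂) := by
  classical
  constructor
  · intro e he
    simp only [CESw, Finset.mem_union, Finset.mem_filter] at he
    rcases he with ⟨he, hn⟩ | ⟨he, u, hu, huC⟩
    · refine ⟨(h₁.1 e he).1, fun v hv => ?_⟩
      have := (h₁.1 e he).2 v hv
      simp only [Finset.mem_union, Finset.mem_sdiff]
      exact Or.inl ⟨this, fun hc => hn ⟨v, hv, hc⟩⟩
    · refine ⟨(h₂.1 e he).1, fun v hv => ?_⟩
      have := (h₂.1 e he).2 v hv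
      simp only [Finset.mem_union, Finset.mem_inter]
      exact Or.inr ⟨this, hC₂ e he u hu v hv huC⟩
  · intro v hv
    simp only [Finset.mem_union, Finset.mem_inter, Finset.mem_sdiff] at hv
    rcases hv with ⟨hv, hc⟩ | ⟨hv, hc⟩
    · obtain ⟨e, he, hu⟩ := h₁.2 v hv
      refine ⟨e, ⟨?_, he.2⟩, ?_⟩
      · simp only [CESw, Finset.mem_union, Finset.mem_filter]
        exact Or.inl ⟨he.1, fun ⟨u, hu, huC⟩ => hc (hC₁ e he.1 u hu v he.2 huC)⟩
      · rintro f ⟨hf, hvf⟩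
        simp only [CESw, Finset.mem_union, Finset.mem_filter] at hf
        rcases hf with ⟨hf, -⟩ | ⟨hf, u, huf, huC⟩
        · exact hu f ⟨hf, hvf⟩
        · exact absurd (hC₂ f hf u huf v hvf huC) hc
    · obtain ⟨e, he, hu⟩ := h₂.2 v hv
      refine ⟨e, ⟨?_, he.2⟩, ?_⟩
      · simp only [CESw, Finset.mem_union, Finset.mem_filter]
        exact Or.inr ⟨he.1, v, he.2, hc⟩
      · rintro f ⟨hf, hvf⟩
        simp only [CESw, Finset.mem_union, Finset.mem_filter] at hf
        rcases hf with ⟨hf, hn⟩ | ⟨hf, -⟩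
        · exact absurd ⟨v, hvf, hc⟩ hn
        · exact hu f ⟨hf, hvf⟩

lemma ce_sw_sw {α : Type*} (C : Finset α) (m₁ m₂ : Finset (Sym2 α)) :
    CESw C (CESw C m₁ m₂) (CESw C m₂ m₁) = m₁ := by
  classical
  ext e
  simp only [CESw, Finset.mem_union, Finset.mem_filter]
  by_cases hP : ∃ v ∈ e, v ∈ C <;> simp only [hP, not_true, not_false_iff] <;> tauto

lemma ce_sw_union {α : Type*} [DecidableEq α] (C : Finset α) (m₁ m₂ : Finset (Sym2 α)) :
    (CESw C m₁ m₂) ∪ (CESw C m₂ m₁) = m₁ ∪ m₂ := by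
  classical
  ext e
  simp only [CESw, Finset.mem_union, Finset.mem_filter]
  by_cases hP : ∃ v ∈ e, v ∈ C <;> simp only [hP, not_true, not_false_iff] <;> tauto

lemma ce_sw_H {α : Type*} [DecidableEq α] (C : Finset α) (m₁ m₂ : Finset (Sym2 α)) :
    CEH (CESw C m₁ m₂) (CESw C m₂ m₁) = CEH m₁ m₂ := by
  unfold CEH
  rw [ce_sw_union]

lemma ce_sw_prod {α R : Type*} [CommRing R] (w : Sym2 α → R) (C : Finset α)
    (m₁ m₂ : Finset (Sym2 α)) :
    (∏ e ∈ CESw C m₁ m₂, w e) * (∏ e ∈ CESw C m₂ m₁, w e) =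
      (∏ e ∈ m₁, w e) * ∏ e ∈ m₂, w e := by
  classical
  have key : ∀ m₁ m₂ : Finset (Sym2 α), ∏ e ∈ CESw C m₁ m₂, w e =
      (∏ e ∈ m₁.filter (fun e => ¬ ∃ v ∈ e, v ∈ C), w e) *
        ∏ e ∈ m₂.filter (fun e => ∃ v ∈ e, v ∈ C), w e := by
    intro m₁ m₂
    have hd : Disjoint (m₁.filter (fun e => ¬ ∃ v ∈ e, v ∈ C))
        (m₂.filter (fun e => ∃ v ∈ e, v ∈ C)) := by
      rw [Finset.disjoint_left]
      intro e h1 h2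
      exact (Finset.mem_filter.1 h1).2 (Finset.mem_filter.1 h2).2
    rw [← Finset.prod_union hd]
    unfold CESw
    congr!
  rw [key, key, ← Finset.prod_filter_mul_prod_filter_not m₁ (fun e => ∃ v ∈ e, v ∈ C),
    ← Finset.prod_filter_mul_prod_filter_not m₂ (fun e => ∃ v ∈ e, v ∈ C)]
  ring

lemma ce_mem_C {α : Type*} [Fintype α] [DecidableEq α] {x v : α}
    {m₁ m₂ : Finset (Sym2 α)} : v ∈ CEC x m₁ m₂ ↔ (CEH m₁ m₂).Reachable x v := by
  simp [CEC]

lemma ce_closed {α : Type*} [Fintype α] [DecidableEq α] (x : α)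
    (m₁ m₂ : Finset (Sym2 α)) : CEClosed (CEC x m₁ m₂) (m₁ ∪ m₂) := by
  intro e he u hu v hv huC
  rw [ce_mem_C] at *
  by_cases huv : u = v
  · exact huv ▸ huC
  · refine huC.trans (SimpleGraph.Adj.reachable ?_)
    have := (Sym2.mem_and_mem_iff huv).1 ⟨hu, hv⟩
    subst this
    rw [CEH, SimpleGraph.fromEdgeSet_adj]
    exact ⟨by exact_mod_cast he, huv⟩

lemma ce_closed₁ {α : Type*} [Fintype α] [DecidableEq α] (x : α)
    (m₁ m₂ : Finset (Sym2 α)) : CEClosed (CEC x m₁ m₂) m₁ :=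
  fun e he => ce_closed x m₁ m₂ e (Finset.mem_union_left _ he)

lemma ce_closed₂ {α : Type*} [Fintype α] [DecidableEq α] (x : α)
    (m₁ m₂ : Finset (Sym2 α)) : CEClosed (CEC x m₁ m₂) m₂ :=
  fun e he => ce_closed x m₁ m₂ e (Finset.mem_union_right _ he)

open Classical in
lemma ce_conn {α : Type*} [Fintype α] [DecidableEq α] (x : α)
    (m₁ m₂ : Finset (Sym2 α)) :
    (CEC x m₁ m₂).card ≤ (CEF (CEC x m₁ m₂) m₁).card +
      (CEF (CEC x m₁ m₂) m₂).card + 1 := by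
  set K := (CEH m₁ m₂).connectedComponentMk x with hK
  have hsupp : ∀ v, v ∈ K.supp ↔ v ∈ CEC x m₁ m₂ := by
    intro v
    rw [ce_mem_C, SimpleGraph.ConnectedComponent.mem_supp_iff, hK, SimpleGraph.ConnectedComponent.eq]
    exact ⟨fun h => h.symm, fun h => h.symm⟩
  have h1 := K.connected_toSimpleGraph.card_vert_le_card_edgeSet_add_one
  have h2 : Nat.card K = (CEC x m₁ m₂).card := by
    have : K.supp = ↑(CEC x m₁ m₂) := by ext v; rw [hsupp]; rfl
    calc Nat.card K = Nat.card K.supp := rfl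
      _ = _ := by rw [this]; simp
  have h3 : Nat.card K.toSimpleGraph.edgeSet ≤
      (CEF (CEC x m₁ m₂) m₁ ∪
        CEF (CEC x m₁ m₂) m₂).card := by
    set T := CEF (CEC x m₁ m₂) m₁ ∪
        CEF (CEC x m₁ m₂) m₂ with hT
    have hmap : ∀ e : Sym2 K, e ∈ K.toSimpleGraph.edgeSet → Sym2.map Subtype.val e ∈ T := by
      intro e
      induction e using Sym2.ind with
      | _ u v =>
        intro he
        rw [SimpleGraph.mem_edgeSet] at he
        have he' : (CEH m₁ m₂).Adj u.1 v.1 := he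
        unfold CEH at he'
        rw [SimpleGraph.fromEdgeSet_adj] at he'
        have hu := (hsupp u.1).1 u.2
        have h := he'.1
        simp only [Finset.coe_union, Set.mem_union, Finset.mem_coe] at h
        rw [Sym2.map_mk, hT, Finset.mem_union, ce_mem_F, ce_mem_F]
        have hx : ∃ t ∈ s(u.1, v.1), t ∈ CEC x m₁ m₂ := ⟨u.1, by simp, hu⟩
        exact h.imp (fun h => ⟨h, hx⟩) (fun h => ⟨h, hx⟩)
    rw [← Nat.card_eq_finsetCard T]
    refine Nat.card_le_card_of_injective
      (fun e : K.toSimpleGraph.edgeSet => (⟨Sym2.map Subtype.val e.1, hmap e.1 e.2⟩ : T)) ?_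
    intro e f hef
    apply Subtype.ext
    exact Sym2.map.injective Subtype.val_injective (congrArg Subtype.val hef)
  have h4 := Finset.card_union_le (CEF (CEC x m₁ m₂) m₁)
        (CEF (CEC x m₁ m₂) m₂)
  omega

lemma ce_key {α : Type*} [Fintype α] [DecidableEq α] {G : SimpleGraph α}
    {m₁ m₂ : Finset (Sym2 α)} {x y z w : α} (hd : [x, y, z, w].Nodup)
    (h₁ : IsPMOn G (Finset.univ \ {x}) m₁) (h₂ : IsPMOn G (Finset.univ \ {y, z, w}) m₂) :
    (CEC x m₁ m₂ ∩ {y, z, w}).card = 1 := by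
  classical
  have c1 := ce_card (ce_restrict h₁ (ce_closed₁ x m₁ m₂))
  have c2 := ce_card (ce_restrict h₂ (ce_closed₂ x m₁ m₂))
  have c3 := ce_conn x m₁ m₂
  have hx : x ∈ CEC x m₁ m₂ := ce_mem_C.2 (SimpleGraph.Reachable.refl _)
  set C := CEC x m₁ m₂
  have e1 : (Finset.univ \ {x}) ∩ C = C \ {x} := by ext; simp; tauto
  have e2 : (Finset.univ \ {y, z, w}) ∩ C = C \ {y, z, w} := by ext; simp; tauto
  rw [e1] at c1
  rw [e2] at c2
  have d1 := Finset.card_sdiff_add_card_inter C {x}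
  have d2 := Finset.card_sdiff_add_card_inter C {y, z, w}
  have : C ∩ {x} = {x} := by ext; simp; rintro rfl; exact hx
  rw [this, Finset.card_singleton] at d1
  omega

/-- the component of a vertex away from x contains an even number of terminals -/
lemma ce_even {α : Type*} [Fintype α] [DecidableEq α] {G : SimpleGraph α}
    {m₁ m₂ : Finset (Sym2 α)} {x y z w : α}
    (h₁ : IsPMOn G (Finset.univ \ {x}) m₁) (h₂ : IsPMOn G (Finset.univ \ {y, z, w}) m₂)
    (v : α) (hx : x ∉ CEC v m₁ m₂) :
    Even (CEC v m₁ m₂ ∩ {y, z, w}).card := by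
  classical
  have c1 := ce_card (ce_restrict h₁ (ce_closed₁ v m₁ m₂))
  have c2 := ce_card (ce_restrict h₂ (ce_closed₂ v m₁ m₂))
  set C := CEC v m₁ m₂
  have e1 : (Finset.univ \ {x}) ∩ C = C := by
    ext t; simp; rintro ht rfl; exact hx ht
  have e2 : (Finset.univ \ {y, z, w}) ∩ C = C \ {y, z, w} := by ext; simp; tauto
  rw [e1] at c1
  rw [e2] at c2
  have d2 := Finset.card_sdiff_add_card_inter C {y, z, w}
  rw [Nat.even_iff]
  omega

lemma ce_H_le {α : Type*} [DecidableEq α] {G : SimpleGraph α}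
    {m₁ m₂ : Finset (Sym2 α)} {s₁ s₂ : Finset α}
    (h₁ : IsPMOn G s₁ m₁) (h₂ : IsPMOn G s₂ m₂) : CEH m₁ m₂ ≤ G := by
  intro u v huv
  rw [CEH, SimpleGraph.fromEdgeSet_adj] at huv
  have := huv.1
  simp only [Finset.coe_union, Set.mem_union, Finset.mem_coe] at this
  rcases this with h | h
  · exact (h₁.1 _ h).1
  · exact (h₂.1 _ h).1

lemma ce_path {α : Type*} [DecidableEq α] {H G : SimpleGraph α} (hle : H ≤ G) {u v : α}
    (h : H.Reachable u v) : ∃ p : G.Walk u v, p.IsPath ∧ ∀ t ∈ p.support, H.Reachable u t := by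
  obtain ⟨p, hp⟩ := h.exists_isPath
  refine ⟨p.mapLe hle, ?_, ?_⟩
  · exact (SimpleGraph.Walk.isPath_mapLe hle).2 hp
  · intro t ht
    rw [SimpleGraph.Walk.support_mapLe_eq_support] at ht
    exact ⟨p.takeUntil t ht⟩

/-- the two paths, when x is joined to w -/
lemma ce_disj {α : Type*} [Fintype α] [DecidableEq α] {G : SimpleGraph α}
    {m₁ m₂ : Finset (Sym2 α)} {x y z w : α} (hd : [x, y, z, w].Nodup)
    (h₁ : IsPMOn G (Finset.univ \ {x}) m₁) (h₂ : IsPMOn G (Finset.univ \ {y, z, w}) m₂)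
    (hw : (CEH m₁ m₂).Reachable x w) :
    DisjointPaths G {t | t ∈ [x, y, z, w]} x w y z := by
  have hk := ce_key hd h₁ h₂
  obtain ⟨t, ht⟩ := Finset.card_eq_one.1 hk
  have hw' : w = t := by
    have : w ∈ CEC x m₁ m₂ ∩ {y, z, w} := by simp [ce_mem_C, hw]
    rw [ht] at this; simpa using this
  subst hw'
  simp only [List.nodup_cons, List.mem_cons, List.not_mem_nil, not_or, or_false] at hd
  have hy : ¬ (CEH m₁ m₂).Reachable x y := by
    intro h
    have : y ∈ CEC x m₁ m₂ ∩ {y, z, w} := by simp [ce_mem_C, h]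
    rw [ht, Finset.mem_singleton] at this; tauto
  have hz : ¬ (CEH m₁ m₂).Reachable x z := by
    intro h
    have : z ∈ CEC x m₁ m₂ ∩ {y, z, w} := by simp [ce_mem_C, h]
    rw [ht, Finset.mem_singleton] at this; tauto
  have hyw : ¬ (CEH m₁ m₂).Reachable y w := fun h => hy (hw.trans h.symm)
  have hev := ce_even h₁ h₂ y (by rw [ce_mem_C]; exact fun h => hy h.symm)
  have hyz : (CEH m₁ m₂).Reachable y z := by
    by_contra hn
    have : CEC y m₁ m₂ ∩ {y, z, w} = {y} := by
      ext t
      simp only [Finset.mem_inter, ce_mem_C, Finset.mem_insert, Finset.mem_singleton]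
      constructor
      · rintro ⟨h, rfl | rfl | rfl⟩
        · rfl
        · exact absurd h hn
        · exact absurd h hyw
      · rintro rfl; exact ⟨SimpleGraph.Reachable.refl _, Or.inl rfl⟩
    rw [this] at hev
    simp at hev
  have hle := ce_H_le h₁ h₂
  obtain ⟨p, hp, hps⟩ := ce_path hle hw
  obtain ⟨q, hq, hqs⟩ := ce_path hle hyz
  refine ⟨p, q, hp, hq, ?_, ?_, ?_⟩
  · intro u hu hu'
    exact hy ((hps u hu).trans (hqs u hu').symm)
  · intro u hu hux huw hmem
    have := hps u hu
    simp only [Set.mem_ofPred_eq, List.mem_cons, List.not_mem_nil, or_false] at hmem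
    rcases hmem with rfl | rfl | rfl | rfl <;> tauto
  · intro u hu huy huz hmem
    have := hqs u hu
    simp only [Set.mem_ofPred_eq, List.mem_cons, List.not_mem_nil, or_false] at hmem
    rcases hmem with rfl | rfl | rfl | rfl
    · exact hy this.symm
    · tauto
    · tauto
    · tauto

open Classical in
noncomputable def CES {α R : Type*} [Fintype α] [DecidableEq α] [CommRing R]
    (G : SimpleGraph α) (wt : Sym2 α → R) (x y z w : α) : R :=
  ∑ p ∈ Finset.univ.filter (fun p : Finset (Sym2 α) × Finset (Sym2 α) =>
    (IsPMOn G (Finset.univ \ {x}) p.1 ∧ IsPMOn G (Finset.univ \ {y, z, w}) p.2) ∧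
      (CEH p.1 p.2).Reachable x y), (∏ e ∈ p.1, wt e) * ∏ e ∈ p.2, wt e

lemma ce_split {α R : Type*} [Fintype α] [DecidableEq α] [CommRing R]
    (G : SimpleGraph α) (wt : Sym2 α → R) {x y z w : α} (hd : [x, y, z, w].Nodup)
    (hn : ¬ DisjointPaths G {t | t ∈ [x, y, z, w]} x w y z) :
    pmSum G wt (Finset.univ \ {x}) * pmSum G wt (Finset.univ \ {y, z, w}) =
      CES G wt x y z w + CES G wt x z y w := by
  classical
  have hset : ({z, y, w} : Finset α) = {y, z, w} := by ext; simp; tauto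
  unfold pmSum CES
  rw [hset, Finset.sum_mul_sum, ← Finset.sum_product', ← Finset.sum_union]
  · apply Finset.sum_congr _ (fun _ _ => rfl)
    ext ⟨m₁, m₂⟩
    simp only [Finset.mem_product, Finset.mem_filter, Finset.mem_univ, true_and, Finset.mem_union]
    rw [← and_or_left]
    refine ⟨fun h => ⟨h, ?_⟩, fun h => h.1⟩
    obtain ⟨t, ht⟩ := Finset.card_eq_one.1 (ce_key hd h.1 h.2)
    have htm : t ∈ CEC x m₁ m₂ ∩ {y, z, w} := by rw [ht]; simp
    simp only [Finset.mem_inter, ce_mem_C, Finset.mem_insert, Finset.mem_singleton] at htm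
    obtain ⟨hr, rfl | rfl | rfl⟩ := htm
    · exact Or.inl hr
    · exact Or.inr hr
    · exact absurd (ce_disj hd h.1 h.2 hr) hn
  · rw [Finset.disjoint_left]
    rintro ⟨m₁, m₂⟩ h h'
    simp only [Finset.mem_filter, Finset.mem_univ, true_and] at h h'
    obtain ⟨t, ht⟩ := Finset.card_eq_one.1 (ce_key hd h.1.1 h.1.2)
    have h1 : y ∈ CEC x m₁ m₂ ∩ {y, z, w} := by simp [ce_mem_C, h.2]
    have h2 : z ∈ CEC x m₁ m₂ ∩ {y, z, w} := by simp [ce_mem_C, h'.2]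
    rw [ht, Finset.mem_singleton] at h1 h2
    simp only [List.nodup_cons, List.mem_cons, not_or] at hd
    exact hd.2.1.1 (h1.trans h2.symm)

lemma ce_swap_mem {α : Type*} [Fintype α] [DecidableEq α] {G : SimpleGraph α}
    {m₁ m₂ : Finset (Sym2 α)} {x y z w : α} (hd : [x, y, z, w].Nodup)
    (h : (IsPMOn G (Finset.univ \ {x}) m₁ ∧ IsPMOn G (Finset.univ \ {y, z, w}) m₂) ∧
      (CEH m₁ m₂).Reachable x y) :
    (IsPMOn G (Finset.univ \ {y}) (CESw (CEC x m₁ m₂) m₁ m₂) ∧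
      IsPMOn G (Finset.univ \ {x, z, w}) (CESw (CEC x m₁ m₂) m₂ m₁)) ∧
      (CEH (CESw (CEC x m₁ m₂) m₁ m₂) (CESw (CEC x m₁ m₂) m₂ m₁)).Reachable y x := by
  obtain ⟨⟨h₁, h₂⟩, hr⟩ := h
  obtain ⟨t, ht⟩ := Finset.card_eq_one.1 (ce_key hd h₁ h₂)
  have hy : y = t := by
    have : y ∈ CEC x m₁ m₂ ∩ {y, z, w} := by simp [ce_mem_C, hr]
    rw [ht] at this; simpa using this
  subst hy
  simp only [List.nodup_cons, List.mem_cons, List.not_mem_nil, not_or, or_false] at hd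
  have hzC : z ∉ CEC x m₁ m₂ := by
    intro h
    have : z ∈ CEC x m₁ m₂ ∩ {y, z, w} := by simp [h]
    rw [ht, Finset.mem_singleton] at this; tauto
  have hwC : w ∉ CEC x m₁ m₂ := by
    intro h
    have : w ∈ CEC x m₁ m₂ ∩ {y, z, w} := by simp [h]
    rw [ht, Finset.mem_singleton] at this; tauto
  have hxC : x ∈ CEC x m₁ m₂ := ce_mem_C.2 (SimpleGraph.Reachable.refl _)
  have hyC : y ∈ CEC x m₁ m₂ := ce_mem_C.2 hr
  refine ⟨⟨?_, ?_⟩, ?_⟩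
  · convert ce_sw h₁ h₂ (ce_closed₁ x m₁ m₂) (ce_closed₂ x m₁ m₂) using 1
    ext t
    simp only [Finset.mem_union, Finset.mem_inter, Finset.mem_sdiff, Finset.mem_univ,
      Finset.mem_insert, Finset.mem_singleton, true_and]
    by_cases ht : t ∈ CEC x m₁ m₂ <;> grind
  · convert ce_sw h₂ h₁ (ce_closed₂ x m₁ m₂) (ce_closed₁ x m₁ m₂) using 1
    ext t
    simp only [Finset.mem_union, Finset.mem_inter, Finset.mem_sdiff, Finset.mem_univ,
      Finset.mem_insert, Finset.mem_singleton, true_and]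
    by_cases ht : t ∈ CEC x m₁ m₂ <;> grind
  · rw [ce_sw_H]; exact hr.symm

lemma ce_C_eq {α : Type*} [Fintype α] [DecidableEq α]
    {m₁ m₂ : Finset (Sym2 α)} {x y : α} (hr : (CEH m₁ m₂).Reachable x y) :
    CEC y (CESw (CEC x m₁ m₂) m₁ m₂) (CESw (CEC x m₁ m₂) m₂ m₁) = CEC x m₁ m₂ := by
  ext t
  rw [ce_mem_C, ce_mem_C, ce_sw_H]
  exact ⟨fun h => hr.trans h, fun h => hr.symm.trans h⟩

lemma ce_swap {α R : Type*} [Fintype α] [DecidableEq α] [CommRing R]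
    (G : SimpleGraph α) (wt : Sym2 α → R) {x y z w : α} (hd : [x, y, z, w].Nodup) :
    CES G wt x y z w = CES G wt y x z w := by
  classical
  have hd' : [y, x, z, w].Nodup := by
    simp only [List.nodup_cons, List.mem_cons, List.not_mem_nil, not_or, or_false] at hd ⊢
    grind
  unfold CES
  refine Finset.sum_bij'
    (fun p _ => (CESw (CEC x p.1 p.2) p.1 p.2, CESw (CEC x p.1 p.2) p.2 p.1))
    (fun p _ => (CESw (CEC y p.1 p.2) p.1 p.2, CESw (CEC y p.1 p.2) p.2 p.1)) ?_ ?_ ?_ ?_ ?_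
  · rintro ⟨m₁, m₂⟩ h
    simp only [Finset.mem_filter, Finset.mem_univ, true_and] at h ⊢
    exact ce_swap_mem hd h
  · rintro ⟨m₁, m₂⟩ h
    simp only [Finset.mem_filter, Finset.mem_univ, true_and] at h ⊢
    exact ce_swap_mem hd' h
  · rintro ⟨m₁, m₂⟩ h
    simp only [Finset.mem_filter, Finset.mem_univ, true_and] at h ⊢
    rw [ce_C_eq h.2, ce_sw_sw, ce_sw_sw]
  · rintro ⟨m₁, m₂⟩ h
    simp only [Finset.mem_filter, Finset.mem_univ, true_and] at h ⊢
    rw [ce_C_eq h.2, ce_sw_sw, ce_sw_sw]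
  · rintro ⟨m₁, m₂⟩ h
    exact (ce_sw_prod wt _ _ _).symm

lemma ce_S_comm {α R : Type*} [Fintype α] [DecidableEq α] [CommRing R]
    (G : SimpleGraph α) (wt : Sym2 α → R) (x y z w : α) :
    CES G wt x y z w = CES G wt x y w z := by
  have hset : ({y, z, w} : Finset α) = {y, w, z} := by ext; simp; tauto
  unfold CES
  rw [hset]

lemma ce_dp_flip₁ {α : Type*} {G : SimpleGraph α} {S : Set α} {a b c d : α}
    (h : DisjointPaths G S a b c d) : DisjointPaths G S b a c d := by
  obtain ⟨p, q, hp, hq, h1, h2, h3⟩ := h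
  refine ⟨p.reverse, q, hp.reverse, hq, ?_, ?_, h3⟩
  · simpa using h1
  · intro u hu h h'
    exact h2 u (by simpa using hu) h' h

lemma ce_dp_comm {α : Type*} {G : SimpleGraph α} {S : Set α} {a b c d : α}
    (h : DisjointPaths G S a b c d) : DisjointPaths G S c d a b := by
  obtain ⟨p, q, hp, hq, h1, h2, h3⟩ := h
  exact ⟨q, p, hq, hp, fun u hu hu' => h1 u hu' hu, h3, h2⟩

/-- Condensation identity for a graph with an odd number of vertices
(Corollary 2.7). -/
theorem condensation_odd_four_vertices {α R : Type*} [Fintype α] [DecidableEq α] [CommRing R]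
    (G : SimpleGraph α) (w : Sym2 α → R) (n : ℕ)
    (hcard : Fintype.card α = 2 * n + 1)
    (a₁ b₁ a₂ b₂ : α)
    (hdist : ([a₁, b₁, a₂, b₂] : List α).Nodup)
    (hnc : NoncrossingList G [a₁, b₁, a₂, b₂]) :
    pmSum G w (Finset.univ \ {a₁}) * pmSum G w (Finset.univ \ {a₂, b₁, b₂}) +
      pmSum G w (Finset.univ \ {a₂}) * pmSum G w (Finset.univ \ {a₁, b₁, b₂}) =
    pmSum G w (Finset.univ \ {b₁}) * pmSum G w (Finset.univ \ {a₁, a₂, b₂}) +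
      pmSum G w (Finset.univ \ {b₂}) * pmSum G w (Finset.univ \ {a₁, a₂, b₁}) := by
  have h0 : ¬ DisjointPaths G {t | t ∈ [a₁, b₁, a₂, b₂]} a₁ a₂ b₁ b₂ :=
    hnc ⟨0, by simp⟩ ⟨1, by simp⟩ ⟨2, by simp⟩ ⟨3, by simp⟩ (by simp) (by simp) (by simp)
  have hS1 : {t | t ∈ [a₁, b₁, b₂, a₂]} = {t | t ∈ [a₁, b₁, a₂, b₂]} := by
    ext; simp; tauto
  have hS2 : {t | t ∈ [a₂, b₁, b₂, a₁]} = {t | t ∈ [a₁, b₁, a₂, b₂]} := by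
    ext; simp; tauto
  have hS3 : {t | t ∈ [b₁, a₁, a₂, b₂]} = {t | t ∈ [a₁, b₁, a₂, b₂]} := by
    ext; simp; tauto
  have hS4 : {t | t ∈ [b₂, a₁, a₂, b₁]} = {t | t ∈ [a₁, b₁, a₂, b₂]} := by
    ext; simp; tauto
  have n1 : [a₁, b₁, b₂, a₂].Nodup := by
    simp only [List.nodup_cons, List.mem_cons, List.not_mem_nil, not_or, or_false] at hdist ⊢
    grind
  have n1' : [a₁, b₂, b₁, a₂].Nodup := by
    simp only [List.nodup_cons, List.mem_cons, List.not_mem_nil, not_or, or_false] at hdist ⊢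
    grind
  have n2 : [a₂, b₁, b₂, a₁].Nodup := by
    simp only [List.nodup_cons, List.mem_cons, List.not_mem_nil, not_or, or_false] at hdist ⊢
    grind
  have n2' : [a₂, b₂, b₁, a₁].Nodup := by
    simp only [List.nodup_cons, List.mem_cons, List.not_mem_nil, not_or, or_false] at hdist ⊢
    grind
  have n3 : [b₁, a₁, a₂, b₂].Nodup := by
    simp only [List.nodup_cons, List.mem_cons, List.not_mem_nil, not_or, or_false] at hdist ⊢
    grind
  have n4 : [b₂, a₁, a₂, b₁].Nodup := by
    simp only [List.nodup_cons, List.mem_cons, List.not_mem_nil, not_or, or_false] at hdist ⊢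
    grind
  have e1 : ({a₂, b₁, b₂} : Finset α) = {b₁, b₂, a₂} := by ext; simp; tauto
  have e2 : ({a₁, b₁, b₂} : Finset α) = {b₁, b₂, a₁} := by ext; simp; tauto
  rw [e1, e2, ce_split G w n1 (by rw [hS1]; exact h0),
    ce_split G w n2 (by rw [hS2]; exact fun h => h0 (ce_dp_flip₁ h)),
    ce_split G w n3 (by rw [hS3]; exact fun h => h0 (ce_dp_comm h)),
    ce_split G w n4 (by rw [hS4]; exact fun h => h0 (ce_dp_comm (ce_dp_flip₁ h))),
    ce_swap G w n1, ce_swap G w n1', ce_swap G w n2, ce_swap G w n2',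
    ce_S_comm G w b₁ a₁ b₂ a₂, ce_S_comm G w b₂ a₁ b₁ a₂,
    ce_S_comm G w b₁ a₂ b₂ a₁, ce_S_comm G w b₂ a₂ b₁ a₁]
  ring
end

section
/- Let G be a finite simple bipartite graph with bipartition classes U and V satisfying |U| = |V| + 1, with edge weights in a commutative ring, and let a_1, b_1, a_2, b_2 be distinct vertices with a_1, b_1, a_2 ∈ U and b_2 ∈ V, such that G is noncrossing with respect to the cyclic sequence (a_1, b_1, a_2, b_2). Then M(G−{a_1})·M(G−{a_2,b_1,b_2}) + M(G−{a_2})·M(G−{a_1,b_1,b_2}) = M(G−{b_1})·M(G−{a_1,a_2,b_2}). -/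
open Classical in
noncomputable def kSw {α : Type*} (C : Finset α) (M N : Finset (Sym2 α)) : Finset (Sym2 α) :=
  M.filter (fun e => ¬ ∀ v ∈ e, v ∈ C) ∪ N.filter (fun e => ∀ v ∈ e, v ∈ C)

lemma kSw_mem {α : Type*} (C : Finset α) (M N : Finset (Sym2 α)) (e : Sym2 α) :
    e ∈ kSw C M N ↔ (e ∈ M ∧ ¬ ∀ v ∈ e, v ∈ C) ∨ (e ∈ N ∧ ∀ v ∈ e, v ∈ C) := by
  classical
  simp [kSw]

lemma kSw_kSw {α : Type*} (C : Finset α) (M N : Finset (Sym2 α)) :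
    kSw C (kSw C M N) (kSw C N M) = M := by
  ext e
  simp only [kSw_mem]
  tauto

lemma kSw_prod {α R : Type*} [CommRing R] (w : Sym2 α → R) (C : Finset α)
    (M N : Finset (Sym2 α)) :
    (∏ e ∈ kSw C M N, w e) * (∏ e ∈ kSw C N M, w e) = (∏ e ∈ M, w e) * ∏ e ∈ N, w e := by
  classical
  have h : ∀ M N : Finset (Sym2 α), ∏ e ∈ kSw C M N, w e =
      (∏ e ∈ M.filter (fun e => ¬ ∀ v ∈ e, v ∈ C), w e) *
        ∏ e ∈ N.filter (fun e => ∀ v ∈ e, v ∈ C), w e := by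
    intro M N
    have : kSw C M N = M.filter (fun e => ¬ ∀ v ∈ e, v ∈ C) ∪
      N.filter (fun e => ∀ v ∈ e, v ∈ C) := by
      ext e; simp [kSw_mem]
    rw [this, Finset.prod_union]
    rw [Finset.disjoint_left]
    intro e he he'
    simp only [Finset.mem_filter] at he he'
    exact he.2 he'.2
  rw [h, h, ← Finset.prod_filter_mul_prod_filter_not M (fun e => ∀ v ∈ e, v ∈ C),
    ← Finset.prod_filter_mul_prod_filter_not N (fun e => ∀ v ∈ e, v ∈ C)]
  ring

def kClosed {α : Type*} (C : Finset α) (M : Finset (Sym2 α)) : Prop :=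
  ∀ e ∈ M, ∀ x ∈ e, ∀ y ∈ e, x ∈ C → y ∈ C

lemma kSw_pm {α : Type*} [DecidableEq α] (G : SimpleGraph α) (s t C : Finset α)
    (M N : Finset (Sym2 α)) (hM : IsPMOn G s M) (hN : IsPMOn G t N)
    (cM : kClosed C M) (cN : kClosed C N) : IsPMOn G ((s \ C) ∪ (t ∩ C)) (kSw C M N) := by
  refine ⟨?_, ?_⟩
  · intro e he
    rw [kSw_mem] at he
    rcases he with ⟨h1, h2⟩ | ⟨h1, h2⟩
    · refine ⟨(hM.1 e h1).1, fun v hv => ?_⟩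
      have := (hM.1 e h1).2 v hv
      simp only [Finset.mem_union, Finset.mem_sdiff, Finset.mem_inter]
      exact Or.inl ⟨this, fun hc => h2 fun u hu => cM e h1 v hv u hu hc⟩
    · refine ⟨(hN.1 e h1).1, fun v hv => ?_⟩
      have := (hN.1 e h1).2 v hv
      simp only [Finset.mem_union, Finset.mem_sdiff, Finset.mem_inter]
      exact Or.inr ⟨this, h2 v hv⟩
  · intro v hv
    simp only [Finset.mem_union, Finset.mem_sdiff, Finset.mem_inter] at hv
    rcases hv with ⟨h1, h2⟩ | ⟨h1, h2⟩
    · obtain ⟨e, ⟨he, hve⟩, hu⟩ := hM.2 v h1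
      refine ⟨e, ⟨?_, hve⟩, ?_⟩
      · rw [kSw_mem]; exact Or.inl ⟨he, fun h => h2 (h v hve)⟩
      · rintro f ⟨hf, hvf⟩
        rw [kSw_mem] at hf
        rcases hf with hf | hf
        · exact hu f ⟨hf.1, hvf⟩
        · exact absurd (hf.2 v hvf) h2
    · obtain ⟨e, ⟨he, hve⟩, hu⟩ := hN.2 v h1
      refine ⟨e, ⟨?_, hve⟩, ?_⟩
      · rw [kSw_mem]; exact Or.inr ⟨he, fun u hu => cN e he v hve u hu h2⟩
      · rintro f ⟨hf, hvf⟩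
        rw [kSw_mem] at hf
        rcases hf with hf | hf
        · exact absurd (fun u hu => cM f hf.1 v hvf u hu h2) hf.2
        · exact hu f ⟨hf.1, hvf⟩

lemma k_partner {α : Type*} (G : SimpleGraph α) (s : Finset α) (M : Finset (Sym2 α))
    (hM : IsPMOn G s M) (v : α) (hv : v ∈ s) : ∃ u, s(v, u) ∈ M := by
  obtain ⟨e, ⟨he, hve⟩, -⟩ := hM.2 v hv
  obtain ⟨u, rfl⟩ := hve
  exact ⟨u, he⟩

lemma k_unique {α : Type*} (G : SimpleGraph α) (s : Finset α) (M : Finset (Sym2 α))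
    (hM : IsPMOn G s M) {v u u' : α} (h : s(v, u) ∈ M) (h' : s(v, u') ∈ M) : u = u' := by
  have hv : v ∈ s := (hM.1 _ h).2 v (by simp)
  have := (hM.2 v hv).unique ⟨h, by simp⟩ ⟨h', by simp⟩
  exact Sym2.congr_right.1 this

lemma k_card {α : Type*} [Fintype α] [DecidableEq α] (G : SimpleGraph α) (U V : Finset α)
    (hb : IsBipartition G U V) (s : Finset α) (M : Finset (Sym2 α)) (hM : IsPMOn G s M) :
    (s ∩ U).card = (s ∩ V).card := by
  have hp := k_partner G s M hM
  choose! f hf using hp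
  have hfs : ∀ v ∈ s, f v ∈ s := fun v hv => (hM.1 _ (hf v hv)).2 _ (by simp)
  have hff : ∀ v ∈ s, f (f v) = v := fun v hv =>
    k_unique G s M hM (hf _ (hfs v hv)) (by rw [Sym2.eq_swap]; exact hf v hv)
  have hadj : ∀ v ∈ s, G.Adj v (f v) := fun v hv => (hM.1 _ (hf v hv)).1
  have hd := Finset.disjoint_left.1 hb.1
  refine Finset.card_nbij' f f ?_ ?_ ?_ ?_
  · intro v hv
    have hv := Finset.mem_inter.1 hv
    refine Finset.mem_coe.2 (Finset.mem_inter.2 ⟨hfs v hv.1, ?_⟩)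
    rcases hb.2.2 (hadj v hv.1) with h | h
    · exact h.2
    · exact absurd h.1 (hd hv.2)
  · intro v hv
    have hv := Finset.mem_inter.1 hv
    refine Finset.mem_coe.2 (Finset.mem_inter.2 ⟨hfs v hv.1, ?_⟩)
    rcases hb.2.2 (hadj v hv.1) with h | h
    · exact absurd hv.2 (hd h.1)
    · exact h.2
  · intro v hv
    exact hff v (Finset.mem_inter.1 hv).1
  · intro v hv
    exact hff v (Finset.mem_inter.1 hv).1

lemma k_card_closed {α : Type*} [Fintype α] [DecidableEq α] (G : SimpleGraph α) (U V : Finset α)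
    (hb : IsBipartition G U V) (s C : Finset α) (M : Finset (Sym2 α)) (hM : IsPMOn G s M)
    (cM : kClosed C M) :
    ((s ∩ C) ∩ U).card = ((s ∩ C) ∩ V).card := by
  have h0 : IsPMOn G ∅ ∅ := ⟨by simp, by simp⟩
  have := kSw_pm G ∅ s C ∅ M h0 hM (by simp [kClosed]) cM
  simpa using k_card G U V hb _ _ this

/-- counting with removed set -/
lemma k_card_compl {α : Type*} [Fintype α] [DecidableEq α] (S C U : Finset α) :
    (((Finset.univ \ S) ∩ C) ∩ U).card + (S.filter (fun x => x ∈ C ∧ x ∈ U)).card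
      = (C ∩ U).card := by
  rw [← Finset.card_union_of_disjoint]
  · congr 1
    ext x
    simp only [Finset.mem_union, Finset.mem_inter, Finset.mem_sdiff, Finset.mem_univ,
      Finset.mem_filter]
    tauto
  · rw [Finset.disjoint_left]
    intro x
    simp only [Finset.mem_inter, Finset.mem_sdiff, Finset.mem_univ, Finset.mem_filter]
    tauto

def kH {α : Type*} (M N : Finset (Sym2 α)) : SimpleGraph α :=
  SimpleGraph.fromEdgeSet {e | e ∈ M ∨ e ∈ N}

open Classical in
noncomputable def kC {α : Type*} [Fintype α] (M N : Finset (Sym2 α)) (b : α) : Finset α :=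
  Finset.univ.filter (fun x => (kH M N).Reachable b x)

lemma kC_mem {α : Type*} [Fintype α] (M N : Finset (Sym2 α)) (b x : α) :
    x ∈ kC M N b ↔ (kH M N).Reachable b x := by
  classical
  simp [kC]

lemma kH_sw {α : Type*} (C : Finset α) (M N : Finset (Sym2 α)) :
    kH (kSw C M N) (kSw C N M) = kH M N := by
  unfold kH
  congr 1
  ext e
  simp only [Set.mem_ofPred_eq, kSw_mem]
  tauto

lemma kC_sw {α : Type*} [Fintype α] (C : Finset α) (M N : Finset (Sym2 α)) (b : α) :
    kC (kSw C M N) (kSw C N M) b = kC M N b := by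
  ext x
  simp only [kC_mem, kH_sw]

lemma kC_closed {α : Type*} [Fintype α] (M N : Finset (Sym2 α)) (b : α) :
    kClosed (kC M N b) M ∧ kClosed (kC M N b) N := by
  have : ∀ e, (e ∈ M ∨ e ∈ N) → ∀ x ∈ e, ∀ y ∈ e, x ∈ kC M N b → y ∈ kC M N b := by
    intro e he x hx y hy h
    by_cases hxy : x = y
    · exact hxy ▸ h
    have h2 : e = s(x, y) := ((Sym2.mem_and_mem_iff hxy).1 ⟨hx, hy⟩)
    rw [kC_mem] at h ⊢
    refine h.trans (SimpleGraph.Adj.reachable ?_)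
    rw [kH, SimpleGraph.fromEdgeSet_adj]
    exact ⟨h2 ▸ he, hxy⟩
  exact ⟨fun e he => this e (Or.inl he), fun e he => this e (Or.inr he)⟩

lemma kH_le {α : Type*} (G : SimpleGraph α) (s t : Finset α)
    (M N : Finset (Sym2 α)) (hM : IsPMOn G s M) (hN : IsPMOn G t N) : kH M N ≤ G := by
  intro x y h
  rw [kH, SimpleGraph.fromEdgeSet_adj] at h
  rcases h.1 with h | h
  · exact (hM.1 _ h).1
  · exact (hN.1 _ h).1

/-- max degree two, three leaves in the same component: impossible -/
lemma k_three {α : Type*} [Fintype α] [DecidableEq α] (H : SimpleGraph α) [DecidableRel H.Adj]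
    (h2 : ∀ v, H.degree v ≤ 2) (x y z : α) (hxy : x ≠ y) (hxz : x ≠ z) (hyz : y ≠ z)
    (hx : H.degree x ≤ 1) (hy : H.degree y ≤ 1) (hz : H.degree z ≤ 1)
    (rxy : H.Reachable x y) (rxz : H.Reachable x z) : False := by
  classical
  let c := H.connectedComponentMk x
  have hc : c.toSimpleGraph.Connected := c.connected_toSimpleGraph
  have h1 := hc.card_vert_le_card_edgeSet_add_one
  have hs := c.toSimpleGraph.sum_degrees_eq_twice_card_edges
  rw [Nat.card_eq_fintype_card, Nat.card_eq_fintype_card,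
    ← SimpleGraph.edgeFinset_card] at h1
  have hd : ∀ v : c, c.toSimpleGraph.degree v ≤ H.degree v := by
    intro v
    rw [← SimpleGraph.card_neighborFinset_eq_degree, ← SimpleGraph.card_neighborFinset_eq_degree]
    refine Finset.card_le_card_of_injOn (fun u => (u : α)) ?_ (fun _ _ _ _ h => Subtype.ext h)
    intro u hu
    simp only [Finset.mem_coe, SimpleGraph.mem_neighborFinset] at hu ⊢
    exact hu
  let X : c := ⟨x, rfl⟩
  let Y : c := ⟨y, SimpleGraph.ConnectedComponent.sound rxy.symm⟩
  let Z : c := ⟨z, SimpleGraph.ConnectedComponent.sound rxz.symm⟩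
  have hXYZ : ({X, Y, Z} : Finset c).card = 3 := by
    rw [Finset.card_eq_three]
    exact ⟨X, Y, Z, fun h => hxy (congrArg Subtype.val h), fun h => hxz (congrArg Subtype.val h),
      fun h => hyz (congrArg Subtype.val h), rfl⟩
  have hsum : ∑ v : c, (c.toSimpleGraph.degree v + if v ∈ ({X, Y, Z} : Finset c) then 1 else 0)
      ≤ ∑ v : c, 2 := by
    refine Finset.sum_le_sum fun v _ => ?_
    split_ifs with h
    · simp only [Finset.mem_insert, Finset.mem_singleton] at h
      have := hd v
      rcases h with rfl | rfl | rfl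
      · have : c.toSimpleGraph.degree X ≤ H.degree x := hd X
        omega
      · have : c.toSimpleGraph.degree Y ≤ H.degree y := hd Y
        omega
      · have : c.toSimpleGraph.degree Z ≤ H.degree z := hd Z
        omega
    · exact (hd v).trans (h2 v)
  rw [Finset.sum_add_distrib, hs, Finset.sum_ite_mem, Finset.univ_inter, Finset.sum_const,
    Finset.sum_const, hXYZ, Finset.card_univ] at hsum
  simp only [smul_eq_mul] at hsum
  omega

lemma kH_adj {α : Type*} (M N : Finset (Sym2 α)) (x y : α) (h : (kH M N).Adj x y) :
    s(x, y) ∈ M ∨ s(x, y) ∈ N := by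
  rw [kH, SimpleGraph.fromEdgeSet_adj] at h
  exact h.1

lemma kH_three {α : Type*} [Fintype α] [DecidableEq α] (G : SimpleGraph α) (s t : Finset α)
    (M N : Finset (Sym2 α)) (hM : IsPMOn G s M) (hN : IsPMOn G t N)
    (x y z : α) (hxy : x ≠ y) (hxz : x ≠ z) (hyz : y ≠ z)
    (hx : x ∉ s ∨ x ∉ t) (hy : y ∉ s ∨ y ∉ t) (hz : z ∉ s ∨ z ∉ t)
    (rxy : (kH M N).Reachable x y) (rxz : (kH M N).Reachable x z) : False := by
  classical
  have key : ∀ (s : Finset α) (M : Finset (Sym2 α)), IsPMOn G s M → ∀ v,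
      (Finset.univ.filter (fun u => s(v, u) ∈ M)).card ≤ 1 ∧
      (v ∉ s → (Finset.univ.filter (fun u => s(v, u) ∈ M)).card = 0) := by
    intro s M hM v
    constructor
    · rw [Finset.card_le_one]
      intro a ha b hb
      simp only [Finset.mem_filter] at ha hb
      exact k_unique G s M hM ha.2 hb.2
    · intro hv
      rw [Finset.card_eq_zero, Finset.filter_eq_empty_iff]
      intro u _ hu
      exact hv ((hM.1 _ hu).2 v (by simp))
  have hdeg : ∀ v, (kH M N).degree v ≤ (Finset.univ.filter (fun u => s(v, u) ∈ M)).card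
      + (Finset.univ.filter (fun u => s(v, u) ∈ N)).card := by
    intro v
    refine le_trans ?_ (Finset.card_union_le _ _)
    rw [← SimpleGraph.card_neighborFinset_eq_degree]
    refine Finset.card_le_card fun u hu => ?_
    rw [SimpleGraph.mem_neighborFinset] at hu
    simpa using kH_adj M N v u hu
  have h1 : ∀ v, (v ∉ s ∨ v ∉ t) → (kH M N).degree v ≤ 1 := by
    intro v hv
    have a := hdeg v
    have b := key s M hM v
    have c := key t N hN v
    rcases hv with hv | hv
    · have := b.2 hv; omega
    · have := c.2 hv; omega
  refine k_three (kH M N) (fun v => ?_) x y z hxy hxz hyz (h1 x hx) (h1 y hy) (h1 z hz) rxy rxz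
  have a := hdeg v
  have b := key s M hM v
  have c := key t N hN v
  omega

lemma k_count {α : Type*} [Fintype α] [DecidableEq α] (G : SimpleGraph α) (U V : Finset α)
    (hb : IsBipartition G U V) (C : Finset α) (M N : Finset (Sym2 α))
    (a b c d : α) (ha : a ∈ U) (hb' : b ∈ U) (hc : c ∈ U) (hd : d ∈ V) (hbc : b ≠ c)
    (hM : IsPMOn G (Finset.univ \ {a}) M) (hN : IsPMOn G (Finset.univ \ {b, c, d}) N)
    (cM : kClosed C M) (cN : kClosed C N) :
    (if a ∈ C then 1 else 0) + (if d ∈ C then 1 else 0)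
      = (if b ∈ C then 1 else 0) + (if c ∈ C then 1 else 0) := by
  have e1 := k_card_closed G U V hb _ C M hM cM
  have e2 := k_card_closed G U V hb _ C N hN cN
  have f1 := k_card_compl {a} C U
  have f2 := k_card_compl {a} C V
  have f3 := k_card_compl {b, c, d} C U
  have f4 := k_card_compl {b, c, d} C V
  have hdis := Finset.disjoint_left.1 hb.1
  have a' := hdis ha
  have b' := hdis hb'
  have c' := hdis hc
  have d' : d ∉ U := fun h => hdis h hd
  by_cases h1 : a ∈ C <;> by_cases h2 : b ∈ C <;> by_cases h3 : c ∈ C <;> by_cases h4 : d ∈ C <;>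
    simp only [Finset.filter_insert, Finset.filter_singleton, ha, hb', hc, hd, a', b', c', d',
      h1, h2, h3, h4, and_true, and_false, true_and, false_and, if_true, if_false,
      Finset.card_empty, Finset.card_singleton, insert_empty_eq, Finset.card_pair hbc] at f1 f2 f3 f4 ⊢ <;> omega

lemma k_noncross {α : Type*} (G : SimpleGraph α) (a₁ b₁ a₂ b₂ : α)
    (hnc : NoncrossingList G [a₁, b₁, a₂, b₂]) (H : SimpleGraph α) (hH : H ≤ G)
    (r1 : H.Reachable a₁ a₂) (r2 : H.Reachable b₁ b₂) : H.Reachable b₁ a₁ := by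
  classical
  by_contra hcon
  obtain ⟨p, hp⟩ := r1.exists_isPath
  obtain ⟨q, hq⟩ := r2.exists_isPath
  have rp : ∀ u ∈ p.support, H.Reachable a₁ u := fun u hu => ⟨p.takeUntil u hu⟩
  have rq : ∀ u ∈ q.support, H.Reachable b₁ u := fun u hu => ⟨q.takeUntil u hu⟩
  have := hnc ⟨0, by simp⟩ ⟨1, by simp⟩ ⟨2, by simp⟩ ⟨3, by simp⟩ (by simp) (by simp) (by simp)
  apply this
  refine ⟨p.mapLe hH, q.mapLe hH, hp.mapLe hH, hq.mapLe hH, ?_, ?_, ?_⟩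
  · intro u hu hu'
    rw [SimpleGraph.Walk.support_mapLe_eq_support] at hu hu'
    exact hcon ((rq u hu').trans (rp u hu).symm)
  · intro u hu h1 h2 h3
    rw [SimpleGraph.Walk.support_mapLe_eq_support] at hu
    have hr := rp u hu
    simp at h1 h2 h3
    rcases h3 with rfl | rfl | rfl | rfl
    · exact h1 rfl
    · exact hcon hr.symm
    · exact h2 rfl
    · exact hcon (r2.trans hr.symm)
  · intro u hu h1 h2 h3
    rw [SimpleGraph.Walk.support_mapLe_eq_support] at hu
    have hr := rq u hu
    simp at h1 h2 h3
    rcases h3 with rfl | rfl | rfl | rfl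
    · exact hcon hr
    · exact h1 rfl
    · exact hcon (hr.trans r1.symm)
    · exact h2 rfl

/-- which marked vertices lie in the component of `b`, left-hand side -/
lemma k_left {α : Type*} [Fintype α] [DecidableEq α] (G : SimpleGraph α) (U V : Finset α)
    (hb : IsBipartition G U V) (M N : Finset (Sym2 α))
    (a b c d : α) (ha : a ∈ U) (hb' : b ∈ U) (hc : c ∈ U) (hd : d ∈ V)
    (hab : a ≠ b) (hac : a ≠ c) (hbc : b ≠ c)
    (hM : IsPMOn G (Finset.univ \ {a}) M) (hN : IsPMOn G (Finset.univ \ {c, b, d}) N)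
    (hnc : ∀ H ≤ G, H.Reachable a c → H.Reachable b d → H.Reachable b a) :
    b ∈ kC M N b ∧ a ∈ kC M N b ∧ c ∉ kC M N b ∧ d ∉ kC M N b := by
  obtain ⟨cM, cN⟩ := kC_closed M N b
  obtain ⟨cM', cN'⟩ := kC_closed M N a
  have k1 := k_count G U V hb (kC M N b) M N a c b d ha hc hb' hd hbc.symm hM hN cM cN
  have k2 := k_count G U V hb (kC M N a) M N a c b d ha hc hb' hd hbc.symm hM hN cM' cN'
  have hbb : b ∈ kC M N b := by rw [kC_mem]
  have haa : a ∈ kC M N a := by rw [kC_mem]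
  have h3 : ¬ (a ∈ kC M N b ∧ c ∈ kC M N b) := by
    rintro ⟨h1, h2⟩
    rw [kC_mem] at h1 h2
    exact kH_three G _ _ M N hM hN b a c hab.symm hbc hac (by simp) (by simp) (by simp) h1 h2
  have hs : b ∈ kC M N a → a ∈ kC M N b := by
    simp only [kC_mem]; exact fun h => h.symm
  have h4 : c ∈ kC M N a → d ∈ kC M N b → a ∈ kC M N b := by
    simp only [kC_mem]
    exact hnc _ (kH_le G _ _ M N hM hN)
  simp only [hbb, haa, if_true] at k1 k2
  split_ifs at k1 k2 <;> first | omega | tauto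

lemma k_right {α : Type*} [Fintype α] [DecidableEq α] (G : SimpleGraph α) (U V : Finset α)
    (hb : IsBipartition G U V) (M N : Finset (Sym2 α))
    (a b c d : α) (ha : a ∈ U) (hb' : b ∈ U) (hc : c ∈ U) (hd : d ∈ V)
    (hab : a ≠ b) (hac : a ≠ c) (hbc : b ≠ c)
    (hM : IsPMOn G (Finset.univ \ {b}) M) (hN : IsPMOn G (Finset.univ \ {a, c, d}) N) :
    b ∈ kC M N b ∧ d ∉ kC M N b ∧ ((a ∈ kC M N b ∧ c ∉ kC M N b) ∨
      (a ∉ kC M N b ∧ c ∈ kC M N b)) := by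
  obtain ⟨cM, cN⟩ := kC_closed M N b
  have k1 := k_count G U V hb (kC M N b) M N b a c d hb' ha hc hd hac hM hN cM cN
  have hbb : b ∈ kC M N b := by rw [kC_mem]
  have h3 : ¬ (a ∈ kC M N b ∧ c ∈ kC M N b) := by
    rintro ⟨h1, h2⟩
    rw [kC_mem] at h1 h2
    exact kH_three G _ _ M N hM hN b a c hab.symm hbc hac (by simp) (by simp) (by simp) h1 h2
  simp only [hbb, if_true] at k1
  split_ifs at k1 <;> first | omega | tauto

noncomputable def kPhi {α : Type*} [Fintype α] (b : α)
    (p : Finset (Sym2 α) × Finset (Sym2 α)) : Finset (Sym2 α) × Finset (Sym2 α) :=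
  (kSw (kC p.1 p.2 b) p.1 p.2, kSw (kC p.1 p.2 b) p.2 p.1)

lemma kPhi_kPhi {α : Type*} [Fintype α] (b : α) (p : Finset (Sym2 α) × Finset (Sym2 α)) :
    kPhi b (kPhi b p) = p := by
  unfold kPhi
  simp only [kC_sw, kSw_kSw]

lemma kPhi_pm {α : Type*} [Fintype α] [DecidableEq α] (G : SimpleGraph α) (b : α)
    (s t s' t' : Finset α)
    (p : Finset (Sym2 α) × Finset (Sym2 α)) (hM : IsPMOn G s p.1) (hN : IsPMOn G t p.2)
    (hs : (s \ kC p.1 p.2 b) ∪ (t ∩ kC p.1 p.2 b) = s')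
    (ht : (t \ kC p.1 p.2 b) ∪ (s ∩ kC p.1 p.2 b) = t') :
    IsPMOn G s' (kPhi b p).1 ∧ IsPMOn G t' (kPhi b p).2 := by
  obtain ⟨cM, cN⟩ := kC_closed p.1 p.2 b
  subst hs ht
  exact ⟨kSw_pm G s t _ _ _ hM hN cM cN, kSw_pm G t s _ _ _ hN hM cN cM⟩

/-- set identity for the swap -/
lemma k_set {α : Type*} [Fintype α] [DecidableEq α] (C : Finset α) (a b c d : α)
    (hab : a ≠ b) (hac : a ≠ c) (had : a ≠ d) (hbc : b ≠ c) (hbd : b ≠ d)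
    (ha : a ∈ C) (hb : b ∈ C) (hc : c ∉ C) (hd : d ∉ C) :
    (((Finset.univ \ {a}) \ C) ∪ ((Finset.univ \ {c, b, d}) ∩ C) = Finset.univ \ {b}) ∧
    (((Finset.univ \ {c, b, d}) \ C) ∪ ((Finset.univ \ {a}) ∩ C) = Finset.univ \ {a, c, d}) := by
  constructor <;> ext x <;> by_cases h1 : x = a <;> by_cases h2 : x = b <;>
    by_cases h3 : x = c <;> by_cases h4 : x = d <;> by_cases h5 : x ∈ C <;>
    simp_all

lemma k_set2 {α : Type*} [Fintype α] [DecidableEq α] (C : Finset α) (a b c d : α)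
    (hab : a ≠ b) (hac : a ≠ c) (had : a ≠ d) (hbc : b ≠ c) (hbd : b ≠ d)
    (ha : a ∈ C) (hb : b ∈ C) (hc : c ∉ C) (hd : d ∉ C) :
    (((Finset.univ \ {b}) \ C) ∪ ((Finset.univ \ {a, c, d}) ∩ C) = Finset.univ \ {a}) ∧
    (((Finset.univ \ {a, c, d}) \ C) ∪ ((Finset.univ \ {b}) ∩ C) = Finset.univ \ {c, b, d}) := by
  constructor <;> ext x <;> by_cases h1 : x = a <;> by_cases h2 : x = b <;>
    by_cases h3 : x = c <;> by_cases h4 : x = d <;> by_cases h5 : x ∈ C <;>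
    simp_all


/-- Bipartite odd condensation (Remark after Corollary 2.7; Theorem 2.4
of Kuo). -/
theorem bipartite_condensation_odd {α R : Type*} [Fintype α] [DecidableEq α] [CommRing R]
    (G : SimpleGraph α) (w : Sym2 α → R)
    (U V : Finset α) (hbip : IsBipartition G U V)
    (hcard : U.card = V.card + 1)
    (a₁ b₁ a₂ b₂ : α)
    (ha₁ : a₁ ∈ U) (hb₁ : b₁ ∈ U) (ha₂ : a₂ ∈ U) (hb₂ : b₂ ∈ V)
    (hdist : ([a₁, b₁, a₂, b₂] : List α).Nodup)
    (hnc : NoncrossingList G [a₁, b₁, a₂, b₂]) :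
    pmSum G w (Finset.univ \ {a₁}) * pmSum G w (Finset.univ \ {a₂, b₁, b₂}) +
      pmSum G w (Finset.univ \ {a₂}) * pmSum G w (Finset.univ \ {a₁, b₁, b₂}) =
    pmSum G w (Finset.univ \ {b₁}) * pmSum G w (Finset.univ \ {a₁, a₂, b₂}) := by
  classical
  obtain ⟨hab, hac, had, hbc, hbd, hcd⟩ : a₁ ≠ b₁ ∧ a₁ ≠ a₂ ∧ a₁ ≠ b₂ ∧ b₁ ≠ a₂ ∧ b₁ ≠ b₂ ∧
      a₂ ≠ b₂ := by
    simp at hdist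
    tauto
  have n1 : ∀ H ≤ G, H.Reachable a₁ a₂ → H.Reachable b₁ b₂ → H.Reachable b₁ a₁ :=
    fun H hH => k_noncross G a₁ b₁ a₂ b₂ hnc H hH
  have n2 : ∀ H ≤ G, H.Reachable a₂ a₁ → H.Reachable b₁ b₂ → H.Reachable b₁ a₂ :=
    fun H hH h h' => (n1 H hH h.symm h').trans h.symm
  have L1 := fun M N h h' =>
    k_left G U V hbip M N a₁ b₁ a₂ b₂ ha₁ hb₁ ha₂ hb₂ hab hac hbc h h' n1
  have L2 := fun M N h h' =>
    k_left G U V hbip M N a₂ b₁ a₁ b₂ ha₂ hb₁ ha₁ hb₂ hbc.symm hac.symm hab.symm h h' n2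
  have R1 := fun M N h h' =>
    k_right G U V hbip M N a₁ b₁ a₂ b₂ ha₁ hb₁ ha₂ hb₂ hab hac hbc h h'
  have hsw : ({a₂, a₁, b₂} : Finset α) = {a₁, a₂, b₂} := Finset.insert_comm _ _ _
  unfold pmSum
  simp only [Finset.sum_mul_sum, ← Finset.sum_product']
  rw [← Finset.sum_union]
  · refine Finset.sum_nbij' (kPhi b₁) (kPhi b₁) ?_ ?_ (fun p _ => kPhi_kPhi b₁ p)
      (fun p _ => kPhi_kPhi b₁ p) (fun p _ => (kSw_prod w _ p.1 p.2).symm)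
    · intro p hp
      simp only [Finset.mem_union, Finset.mem_product, Finset.mem_filter, Finset.mem_univ,
        true_and] at hp ⊢
      rcases hp with ⟨hM, hN⟩ | ⟨hM, hN⟩
      · obtain ⟨h1, h2, h3, h4⟩ := L1 p.1 p.2 hM hN
        obtain ⟨e1, e2⟩ := k_set _ a₁ b₁ a₂ b₂ hab hac had hbc hbd h2 h1 h3 h4
        exact kPhi_pm G b₁ _ _ _ _ p hM hN e1 e2
      · obtain ⟨h1, h2, h3, h4⟩ := L2 p.1 p.2 hM hN
        obtain ⟨e1, e2⟩ := k_set _ a₂ b₁ a₁ b₂ hbc.symm hac.symm hcd hab.symm hbd h2 h1 h3 h4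
        rw [hsw] at e2
        exact kPhi_pm G b₁ _ _ _ _ p hM hN e1 e2
    · intro p hp
      simp only [Finset.mem_union, Finset.mem_product, Finset.mem_filter, Finset.mem_univ,
        true_and] at hp ⊢
      obtain ⟨hM, hN⟩ := hp
      obtain ⟨h1, h2, h3 | h3⟩ := R1 p.1 p.2 hM hN
      · left
        obtain ⟨e1, e2⟩ := k_set2 _ a₁ b₁ a₂ b₂ hab hac had hbc hbd h3.1 h1 h3.2 h2
        exact kPhi_pm G b₁ _ _ _ _ p hM hN e1 e2
      · right
        obtain ⟨e1, e2⟩ := k_set2 _ a₂ b₁ a₁ b₂ hbc.symm hac.symm hcd hab.symm hbd h3.2 h1 h3.1 h2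
        rw [hsw] at e1 e2
        exact kPhi_pm G b₁ _ _ _ _ p hM hN e1 e2
  · rw [Finset.disjoint_left]
    intro p hp hp'
    simp only [Finset.mem_product, Finset.mem_filter, Finset.mem_univ, true_and] at hp hp'
    obtain ⟨u, hu⟩ := k_partner G _ p.1 hp.1 a₂ (by simpa using hac.symm)
    have := (hp'.1.1 _ hu).2 a₂ (by simp)
    simp at this
end

section
/- Let G be a finite simple bipartite graph with bipartition classes U of size n+k and V of size n, with edge weights in a commutative ring, let 2 ≤ k ≤ n, and let a_1, b_1, …, a_k, b_k be distinct vertices with A = {a_1,…,a_k} ⊆ U and B = {b_1,…,b_k} ⊆ U, such that G is noncrossing with respect to the cyclic sequence (a_1, b_1, a_2, b_2, …, a_k, b_k). Then for every partition of A into two disjoint subsets A_1, A_2: M(G−A)·M(G−B) = Σ_{Y⊆B, |Y| = k−|A_1|} M(G−A_1−Y)·M(G−A_2−(B∖Y)). -/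
section Helpers

open Classical in
/-- exchange of two edge sets on the vertex set `C` -/
noncomputable def swE {α : Type*} (C : Finset α) (m₁ m₂ : Finset (Sym2 α)) : Finset (Sym2 α) :=
  m₁.filter (fun e => ¬ ∃ v ∈ e, v ∈ C) ∪ m₂.filter (fun e => ∃ v ∈ e, v ∈ C)

def ClosedE {α : Type*} (C : Finset α) (m : Finset (Sym2 α)) : Prop :=
  ∀ e ∈ m, ∀ x ∈ e, ∀ y ∈ e, x ∈ C → y ∈ C

lemma mem_swE {α : Type*} {C : Finset α} {m₁ m₂ : Finset (Sym2 α)} {e : Sym2 α} :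
    e ∈ swE C m₁ m₂ ↔ (e ∈ m₁ ∧ ¬ ∃ v ∈ e, v ∈ C) ∨ (e ∈ m₂ ∧ ∃ v ∈ e, v ∈ C) := by
  classical
  unfold swE
  simp only [Finset.mem_union, Finset.mem_filter]

lemma swE_swE {α : Type*} (C : Finset α) (m₁ m₂ : Finset (Sym2 α)) :
    swE C (swE C m₁ m₂) (swE C m₂ m₁) = m₁ := by
  ext e
  simp only [mem_swE]
  by_cases h : ∃ v ∈ e, v ∈ C <;> simp [h]

lemma swE_prod {α R : Type*} [CommRing R] (w : Sym2 α → R) (C : Finset α)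
    (m₁ m₂ : Finset (Sym2 α)) :
    (∏ e ∈ swE C m₁ m₂, w e) * (∏ e ∈ swE C m₂ m₁, w e) = (∏ e ∈ m₁, w e) * ∏ e ∈ m₂, w e := by
  classical
  have key : ∀ a b : Finset (Sym2 α), ∏ e ∈ swE C a b, w e =
      (∏ e ∈ a.filter (fun e => ¬ ∃ v ∈ e, v ∈ C), w e) *
        ∏ e ∈ b.filter (fun e => ∃ v ∈ e, v ∈ C), w e := by
    intro a b
    unfold swE
    rw [Finset.prod_union]
    · rw [Finset.disjoint_left]
      intro e h1 h2
      exact (Finset.mem_filter.1 h1).2 (Finset.mem_filter.1 h2).2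
  rw [key, key, ← Finset.prod_filter_mul_prod_filter_not m₁ (fun e => ∃ v ∈ e, v ∈ C),
    ← Finset.prod_filter_mul_prod_filter_not m₂ (fun e => ∃ v ∈ e, v ∈ C)]
  ring

lemma swE_pm {α : Type*} [DecidableEq α] {G : SimpleGraph α} {C s₁ s₂ : Finset α}
    {m₁ m₂ : Finset (Sym2 α)}
    (h₁ : IsPMOn G s₁ m₁) (h₂ : IsPMOn G s₂ m₂) (c₁ : ClosedE C m₁) (c₂ : ClosedE C m₂) :
    IsPMOn G ((s₁ \ C) ∪ (s₂ ∩ C)) (swE C m₁ m₂) := by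
  refine ⟨?_, ?_⟩
  · intro e he
    rcases mem_swE.1 he with ⟨he, hC⟩ | ⟨he, x, hx, hxC⟩
    · refine ⟨(h₁.1 e he).1, fun v hv => ?_⟩
      have h1 := (h₁.1 e he).2 v hv
      have : v ∉ C := fun h => hC ⟨v, hv, h⟩
      simp [h1, this]
    · refine ⟨(h₂.1 e he).1, fun v hv => ?_⟩
      have h1 := (h₂.1 e he).2 v hv
      have := c₂ e he x hx v hv hxC
      simp [h1, this]
  · intro v hv
    simp only [Finset.mem_union, Finset.mem_sdiff, Finset.mem_inter] at hv
    rcases hv with ⟨hv, hC⟩ | ⟨hv, hC⟩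
    · obtain ⟨e, ⟨he, hve⟩, hu⟩ := h₁.2 v hv
      refine ⟨e, ⟨mem_swE.2 (Or.inl ⟨he, ?_⟩), hve⟩, ?_⟩
      · rintro ⟨x, hx, hxC⟩
        exact hC (c₁ e he x hx v hve hxC)
      · rintro e' ⟨he', hve'⟩
        rcases mem_swE.1 he' with ⟨h, _⟩ | ⟨h, x, hx, hxC⟩
        · exact hu e' ⟨h, hve'⟩
        · exact absurd (c₂ e' h x hx v hve' hxC) hC
    · obtain ⟨e, ⟨he, hve⟩, hu⟩ := h₂.2 v hv
      refine ⟨e, ⟨mem_swE.2 (Or.inr ⟨he, v, hve, hC⟩), hve⟩, ?_⟩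
      rintro e' ⟨he', hve'⟩
      rcases mem_swE.1 he' with ⟨h, hn⟩ | ⟨h, x, hx, hxC⟩
      · exact absurd ⟨v, hve', hC⟩ hn
      · exact hu e' ⟨h, hve'⟩

lemma bip_symm {α : Type*} [Fintype α] [DecidableEq α] {G : SimpleGraph α} {U V : Finset α}
    (h : IsBipartition G U V) : IsBipartition G V U :=
  ⟨h.1.symm, by rw [Finset.union_comm]; exact h.2.1, fun x y hxy => (h.2.2 hxy).symm⟩

lemma pm_card {α : Type*} [Fintype α] [DecidableEq α] {G : SimpleGraph α} {U V : Finset α}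
    (hb : IsBipartition G U V) {s : Finset α} {m : Finset (Sym2 α)} (h : IsPMOn G s m) :
    (s ∩ U).card = m.card := by
  classical
  have := Finset.card_mul_eq_card_mul (s := s ∩ U) (t := m) (m := 1) (n := 1) (fun v e => v ∈ e)
    (by
      intro v hv
      obtain ⟨e, he, hu⟩ := h.2 v (Finset.mem_inter.1 hv).1
      rw [Finset.card_eq_one]
      refine ⟨e, ?_⟩
      ext e'
      simp only [Finset.mem_bipartiteAbove, Finset.mem_singleton]
      exact ⟨fun h' => hu e' h', fun h' => h' ▸ he⟩)
    (by
      intro e he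
      obtain ⟨h1, h2⟩ := h.1 e he
      rw [Finset.card_eq_one]
      induction e using Sym2.ind with
      | _ x y =>
        have hd := Finset.disjoint_left.1 hb.1
        have hx := h2 x (by simp)
        have hy := h2 y (by simp)
        rcases hb.2.2 h1 with ⟨a, b⟩ | ⟨a, b⟩
        · refine ⟨x, ?_⟩
          ext z
          simp only [Finset.mem_bipartiteBelow, Finset.mem_singleton, Finset.mem_inter,
            Sym2.mem_iff]
          constructor
          · rintro ⟨⟨_, hz⟩, rfl | rfl⟩
            · rfl
            · exact absurd b (hd hz)
          · rintro rfl; exact ⟨⟨hx, a⟩, Or.inl rfl⟩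
        · refine ⟨y, ?_⟩
          ext z
          simp only [Finset.mem_bipartiteBelow, Finset.mem_singleton, Finset.mem_inter,
            Sym2.mem_iff]
          constructor
          · rintro ⟨⟨_, hz⟩, rfl | rfl⟩
            · exact absurd a (hd hz)
            · rfl
          · rintro rfl; exact ⟨⟨hy, b⟩, Or.inr rfl⟩)
  simpa using this

/-- superposition graph -/
def supG {α : Type*} [DecidableEq α] (m₁ m₂ : Finset (Sym2 α)) : SimpleGraph α :=
  SimpleGraph.fromEdgeSet ((m₁ ∪ m₂ : Finset (Sym2 α)) : Set (Sym2 α))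

lemma supG_swE {α : Type*} [DecidableEq α] (C : Finset α) (m₁ m₂ : Finset (Sym2 α)) :
    supG (swE C m₁ m₂) (swE C m₂ m₁) = supG m₁ m₂ := by
  unfold supG
  congr 2
  ext e
  simp only [Finset.mem_union, mem_swE]
  tauto

lemma supG_reach {α : Type*} [DecidableEq α] {m₁ m₂ : Finset (Sym2 α)} {e : Sym2 α}
    (he : e ∈ m₁ ∪ m₂) {x y : α} (hx : x ∈ e) (hy : y ∈ e) : (supG m₁ m₂).Reachable x y := by
  by_cases hxy : x = y
  · subst hxy; rfl
  · apply SimpleGraph.Adj.reachable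
    have : e = s(x, y) := ((Sym2.mem_and_mem_iff hxy).1 ⟨hx, hy⟩)
    subst this
    unfold supG
    rw [SimpleGraph.fromEdgeSet_adj]
    exact ⟨by exact_mod_cast he, hxy⟩

lemma comp_count {α : Type*} [Fintype α] [DecidableEq α] {G : SimpleGraph α} {U V : Finset α}
    (hb : IsBipartition G U V) {S₁ S₂ : Finset α} {m₁ m₂ : Finset (Sym2 α)}
    (h₁ : IsPMOn G (Finset.univ \ S₁) m₁) (h₂ : IsPMOn G (Finset.univ \ S₂) m₂)
    (hS₁ : S₁ ⊆ U) (hS₂ : S₂ ⊆ U) (x : α) (K : Finset α)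
    (hK : ∀ y, y ∈ K ↔ (supG m₁ m₂).Reachable x y) :
    (S₁ ∩ K).card = (S₂ ∩ K).card ∧ (S₁ ∩ K).card ≤ 1 := by
  classical
  have c₁ : ClosedE K m₁ := fun e he u hu v hv h =>
    (hK v).2 (((hK u).1 h).trans (supG_reach (Finset.mem_union_left _ he) hu hv))
  have c₂ : ClosedE K m₂ := fun e he u hu v hv h =>
    (hK v).2 (((hK u).1 h).trans (supG_reach (Finset.mem_union_right _ he) hu hv))
  have hem : IsPMOn G (∅ : Finset α) ∅ := ⟨by simp, by simp⟩
  have c₀ : ClosedE K ∅ := fun e he => by simp at he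
  have p₁ := swE_pm hem h₁ c₀ c₁
  have p₂ := swE_pm hem h₂ c₀ c₂
  set n₁ := swE K ∅ m₁ with hn₁
  set n₂ := swE K ∅ m₂ with hn₂
  have hd := Finset.disjoint_left.1 hb.1
  have huv : ∀ z, z ∈ U ∨ z ∈ V := fun z => by
    have := Finset.mem_univ z
    rw [← hb.2.1] at this
    simpa using this
  have cnt : ∀ S n, S ⊆ U → IsPMOn G ((∅ \ K) ∪ ((Finset.univ \ S) ∩ K)) n →
      n.card = (K ∩ V).card ∧ n.card + (S ∩ K).card = (K ∩ U).card := by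
    intro S n hS hp
    have e1 := pm_card hb hp
    have e2 := pm_card (bip_symm hb) hp
    constructor
    · rw [← e2]
      congr 1
      ext z
      have := @hS z
      have := @hd z
      simp
      tauto
    · rw [← e1, ← Finset.card_union_of_disjoint]
      · congr 1
        ext z
        have := @hS z
        simp
        tauto
      · rw [Finset.disjoint_left]
        intro z
        simp
        tauto
  have q₁ := cnt S₁ n₁ hS₁ p₁
  have q₂ := cnt S₂ n₂ hS₂ p₂
  have hKc : K.card = (K ∩ U).card + (K ∩ V).card := by
    rw [← Finset.card_union_of_disjoint]
    · congr 1
      ext z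
      have := huv z
      simp
      tauto
    · rw [Finset.disjoint_left]
      intro z
      have := @hd z
      simp
      tauto
  have hconn : ((supG m₁ m₂).induce {y | y ∈ K}).Connected := by
    have hs : {y | y ∈ K} = ((supG m₁ m₂).connectedComponentMk x).supp := by
      ext y
      rw [SimpleGraph.ConnectedComponent.mem_supp_iff, SimpleGraph.ConnectedComponent.eq]
      exact ⟨fun h => ((hK y).1 h).symm, fun h => (hK y).2 h.symm⟩
    rw [hs]
    exact SimpleGraph.ConnectedComponent.connected_toSimpleGraph _
  have hcard := hconn.card_vert_le_card_edgeSet_add_one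
  have hv : Nat.card ({y | y ∈ K} : Set α) = K.card := by
    simp
  have he : Nat.card ((supG m₁ m₂).induce {y | y ∈ K}).edgeSet ≤ (n₁ ∪ n₂).card := by
    have hmem : ∀ e : ((supG m₁ m₂).induce {y | y ∈ K}).edgeSet,
        Sym2.map Subtype.val e.1 ∈ n₁ ∪ n₂ := by
      rintro ⟨e, he⟩
      induction e using Sym2.ind with
      | _ u v =>
        have h1 : (supG m₁ m₂).Adj u.1 v.1 := he
        unfold supG at h1
        rw [SimpleGraph.fromEdgeSet_adj] at h1
        have h2 : s(u.1, v.1) ∈ m₁ ∪ m₂ := by exact_mod_cast h1.1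
        have h3 : ∃ z ∈ s(u.1, v.1), z ∈ K := ⟨u.1, by simp, u.2⟩
        show s(u.1, v.1) ∈ n₁ ∪ n₂
        rw [Finset.mem_union] at h2 ⊢
        rw [hn₁, hn₂, mem_swE, mem_swE]
        exact h2.imp (fun h => Or.inr ⟨h, h3⟩) (fun h => Or.inr ⟨h, h3⟩)
    have := Nat.card_le_card_of_injective
      (fun e => (⟨_, hmem e⟩ : {e // e ∈ n₁ ∪ n₂}))
      (fun e f hef => Subtype.ext
        (Sym2.map.injective Subtype.val_injective (congrArg Subtype.val hef)))
    rwa [Nat.card_eq_fintype_card (α := {e // e ∈ n₁ ∪ n₂}), Fintype.card_coe] at this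
  have := Finset.card_union_le n₁ n₂
  omega

lemma parity_abs {N : ℕ} (r : Fin N → Fin N → Prop) (symm : ∀ i j, r i j → r j i)
    (ex : ∀ i, ∃ j, j ≠ i ∧ r i j)
    (uniq : ∀ i j l, r i j → r i l → j ≠ i → l ≠ i → j = l)
    (nc : ∀ i j k l, i < j → j < k → k < l → r i k → r j l → r i j) :
    ∀ p q : Fin N, p < q → r p q → Odd ((q : ℕ) - p) := by
  intro p q hpq hr
  choose σ hσ1 hσ2 using ex
  have hσσ : ∀ i, σ (σ i) = i := fun i =>
    uniq (σ i) _ _ (hσ2 _) (symm _ _ (hσ2 i)) (hσ1 _) (hσ1 i).symm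
  have huq : ∀ i j, j ≠ i → r i j → j = σ i := fun i j h h' => uniq i _ _ h' (hσ2 i) h (hσ1 i)
  have hmem : ∀ i ∈ Finset.Ioo p q, σ i ∈ Finset.Ioo p q := by
    intro i hi
    rw [Finset.mem_Ioo] at hi ⊢
    have hq : q = σ p := huq p q hpq.ne' hr
    have hp : p = σ q := by rw [hq, hσσ]
    have n1 : σ i ≠ p := fun h => by
      have : i = q := by rw [← hσσ i, h, hq]
      exact hi.2.ne this
    have n2 : σ i ≠ q := fun h => by
      have : i = p := by rw [← hσσ i, h, ← hp]
      exact hi.1.ne' this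
    constructor
    · by_contra hlt
      have hlt : σ i < p := lt_of_le_of_ne (not_lt.1 hlt) n1
      have h1 := nc (σ i) p i q hlt hi.1 hi.2 (symm _ _ (hσ2 i)) hr
      have := huq _ _ hlt.ne' h1
      rw [hσσ] at this
      exact hi.1.ne this
    · by_contra hlt
      have hlt : q < σ i := lt_of_le_of_ne (not_lt.1 hlt) n2.symm
      have h1 := nc p i q (σ i) hi.1 hi.2 hlt hr (hσ2 i)
      have := huq _ _ hi.1.ne' h1
      rw [← hq] at this
      exact hi.2.ne this
  have hz : ∑ i ∈ Finset.Ioo p q, (1 : ZMod 2) = 0 :=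
    Finset.sum_involution (fun i _ => σ i) (fun _ _ => by decide)
      (fun i _ _ => hσ1 i) (fun i hi => hmem i hi) (fun i _ => hσσ i)
  simp only [Finset.sum_const, nsmul_eq_mul, mul_one, Fin.card_Ioo] at hz
  rw [ZMod.natCast_eq_zero_iff] at hz
  have : (p : ℕ) < q := hpq
  rw [Nat.odd_iff]
  omega

lemma flat_even {β α : Type*} (a b : β → α) (l : List β) : ∀ i : ℕ,
    (l.flatMap (fun i => [a i, b i]))[2 * i]? = l[i]?.map a := by
  induction l with
  | nil => simp
  | cons x l ih =>
    intro i
    cases i with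
    | zero => simp
    | succ i => simpa [Nat.mul_add] using ih i

lemma flat_odd {β α : Type*} (a b : β → α) (l : List β) : ∀ i : ℕ,
    (l.flatMap (fun i => [a i, b i]))[2 * i + 1]? = l[i]?.map b := by
  induction l with
  | nil => simp
  | cons x l ih =>
    intro i
    cases i with
    | zero => simp
    | succ i => simpa [Nat.mul_add] using ih i


lemma comp_facts {α : Type*} [Fintype α] [DecidableEq α] {G : SimpleGraph α} {U V : Finset α}
    (hb : IsBipartition G U V) {S₁ S₂ : Finset α} {m₁ m₂ : Finset (Sym2 α)}
    (h₁ : IsPMOn G (Finset.univ \ S₁) m₁) (h₂ : IsPMOn G (Finset.univ \ S₂) m₂)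
    (hS₁ : S₁ ⊆ U) (hS₂ : S₂ ⊆ U) :
    (∀ x ∈ S₁, ∀ y ∈ S₁, (supG m₁ m₂).Reachable x y → x = y) ∧
    (∀ x ∈ S₂, ∀ y ∈ S₂, (supG m₁ m₂).Reachable x y → x = y) ∧
    (∀ x ∈ S₁, ∃ y ∈ S₂, (supG m₁ m₂).Reachable x y) ∧
    (∀ x ∈ S₂, ∃ y ∈ S₁, (supG m₁ m₂).Reachable x y) := by
  classical
  have key := fun x => comp_count hb h₁ h₂ hS₁ hS₂ x
    (Finset.univ.filter (fun y => (supG m₁ m₂).Reachable x y)) (by simp)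
  have hr : ∀ x, (supG m₁ m₂).Reachable x x := fun x => SimpleGraph.Reachable.refl x
  refine ⟨?_, ?_, ?_, ?_⟩
  · intro x hx y hy h
    exact Finset.card_le_one.1 (key x).2 x (by simp [hx]) y (by simp [hy, h])
  · intro x hx y hy h
    exact Finset.card_le_one.1 ((key x).1 ▸ (key x).2) x (by simp [hx]) y (by simp [hy, h])
  · intro x hx
    have : 0 < (S₁ ∩ Finset.univ.filter (fun y => (supG m₁ m₂).Reachable x y)).card :=
      Finset.card_pos.2 ⟨x, by simp [hx]⟩
    rw [(key x).1] at this
    obtain ⟨y, hy⟩ := Finset.card_pos.1 this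
    exact ⟨y, by simpa using hy⟩
  · intro x hx
    have : 0 < (S₂ ∩ Finset.univ.filter (fun y => (supG m₁ m₂).Reachable x y)).card :=
      Finset.card_pos.2 ⟨x, by simp [hx]⟩
    rw [← (key x).1] at this
    obtain ⟨y, hy⟩ := Finset.card_pos.1 this
    exact ⟨y, by simpa using hy⟩

lemma supG_le {α : Type*} [DecidableEq α] {G : SimpleGraph α} {s₁ s₂ : Finset α}
    {m₁ m₂ : Finset (Sym2 α)} (h₁ : IsPMOn G s₁ m₁) (h₂ : IsPMOn G s₂ m₂) :
    supG m₁ m₂ ≤ G := by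
  intro x y h
  unfold supG at h
  rw [SimpleGraph.fromEdgeSet_adj] at h
  have h2 : s(x, y) ∈ m₁ ∪ m₂ := by exact_mod_cast h.1
  rcases Finset.mem_union.1 h2 with h | h
  · exact (h₁.1 _ h).1
  · exact (h₂.1 _ h).1

lemma list_parity {α : Type*} [Fintype α] [DecidableEq α] {G : SimpleGraph α} {U V : Finset α}
    (hb : IsBipartition G U V) {S₁ S₂ : Finset α} {m₁ m₂ : Finset (Sym2 α)}
    (h₁ : IsPMOn G (Finset.univ \ S₁) m₁) (h₂ : IsPMOn G (Finset.univ \ S₂) m₂)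
    (hS₁ : S₁ ⊆ U) (hS₂ : S₂ ⊆ U) (hd : Disjoint S₁ S₂) (L : List α) (hL : L.Nodup)
    (hT : ∀ x, x ∈ L ↔ x ∈ S₁ ∨ x ∈ S₂) (hnc : NoncrossingList G L) :
    ∀ p q : Fin L.length, p < q → (supG m₁ m₂).Reachable (L.get p) (L.get q) →
      Odd ((q : ℕ) - p) := by
  obtain ⟨d1, d2, d3, d4⟩ := comp_facts hb h₁ h₂ hS₁ hS₂
  have hd := Finset.disjoint_left.1 hd
  have hinj : Function.Injective L.get := List.nodup_iff_injective_get.1 hL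
  have hmem : ∀ i, L.get i ∈ S₁ ∨ L.get i ∈ S₂ := fun i => (hT _).1 (List.get_mem L i)
  have hU : ∀ x y z, x ∈ L → y ∈ L → z ∈ L → (supG m₁ m₂).Reachable x y →
      (supG m₁ m₂).Reachable x z → y ≠ x → z ≠ x → y = z := by
    intro x y z hx hy hz hxy hxz nxy nxz
    rw [hT] at hx hy hz
    rcases hx with hx | hx
    · have hy' : y ∈ S₂ := hy.resolve_left (fun h => nxy (d1 x hx y h hxy).symm)
      have hz' : z ∈ S₂ := hz.resolve_left (fun h => nxz (d1 x hx z h hxz).symm)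
      exact d2 y hy' z hz' (hxy.symm.trans hxz)
    · have hy' : y ∈ S₁ := hy.resolve_right (fun h => nxy (d2 x hx y h hxy).symm)
      have hz' : z ∈ S₁ := hz.resolve_right (fun h => nxz (d2 x hx z h hxz).symm)
      exact d1 y hy' z hz' (hxy.symm.trans hxz)
  apply parity_abs (fun i j => (supG m₁ m₂).Reachable (L.get i) (L.get j))
  · intro i j h
    exact h.symm
  · intro i
    have : ∃ y ∈ L, y ≠ L.get i ∧ (supG m₁ m₂).Reachable (L.get i) y := by
      rcases hmem i with h | h
      · obtain ⟨y, hy, hr⟩ := d3 _ h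
        exact ⟨y, (hT y).2 (Or.inr hy), fun e => hd h (e ▸ hy), hr⟩
      · obtain ⟨y, hy, hr⟩ := d4 _ h
        exact ⟨y, (hT y).2 (Or.inl hy), fun e => hd hy (e ▸ h), hr⟩
    obtain ⟨y, hy, hne, hr⟩ := this
    obtain ⟨j, rfl⟩ := List.get_of_mem hy
    exact ⟨j, fun e => hne (by rw [e]), hr⟩
  · intro i j l hij hil hji hli
    exact hinj (hU _ _ _ (List.get_mem L i) (List.get_mem L j) (List.get_mem L l) hij hil
      (fun e => hji (hinj e)) (fun e => hli (hinj e)))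
  · intro i j k l hij hjk hkl hik hjl
    by_contra hn
    apply hnc i j k l hij hjk hkl
    have hle := supG_le h₁ h₂
    have path : ∀ x y, x ∈ L → y ∈ L → x ≠ y → (supG m₁ m₂).Reachable x y →
        ∃ p : G.Walk x y, p.IsPath ∧ (∀ u ∈ p.support, (supG m₁ m₂).Reachable x u) ∧
          ∀ u ∈ p.support, u ≠ x → u ≠ y → u ∉ {z | z ∈ L} := by
      intro x y hx hy hne hr
      obtain ⟨p, hp⟩ := hr.exists_isPath
      have hs : ∀ u ∈ (p.mapLe hle).support, (supG m₁ m₂).Reachable x u := by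
        intro u hu
        rw [SimpleGraph.Walk.support_mapLe_eq_support] at hu
        exact (p.takeUntil u hu).reachable
      refine ⟨p.mapLe hle, (SimpleGraph.Walk.isPath_mapLe hle).2 hp, hs, ?_⟩
      intro u hu hux huy huL
      exact huy (hU x u y hx huL hy (hs u hu) hr hux hne.symm)
    obtain ⟨p, hp, hp1, hp2⟩ := path _ _ (List.get_mem L i) (List.get_mem L k)
      (fun e => (hij.trans hjk).ne (hinj e)) hik
    obtain ⟨q, hq, hq1, hq2⟩ := path _ _ (List.get_mem L j) (List.get_mem L l)
      (fun e => (hjk.trans hkl).ne (hinj e)) hjl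
    exact ⟨p, q, hp, hq, fun u hu hu' => hn ((hp1 u hu).trans (hq1 u hu').symm), hp2, hq2⟩

lemma ab_parity {α : Type*} [Fintype α] [DecidableEq α] {G : SimpleGraph α} {U V : Finset α}
    (hb : IsBipartition G U V) {S₁ S₂ : Finset α} {m₁ m₂ : Finset (Sym2 α)}
    (h₁ : IsPMOn G (Finset.univ \ S₁) m₁) (h₂ : IsPMOn G (Finset.univ \ S₂) m₂)
    (hS₁ : S₁ ⊆ U) (hS₂ : S₂ ⊆ U) (hd : Disjoint S₁ S₂) {k : ℕ} (a b : Fin k → α)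
    (hL : ((List.finRange k).flatMap (fun i => [a i, b i])).Nodup)
    (hT : ∀ x, (x ∈ Finset.univ.image a ∨ x ∈ Finset.univ.image b) ↔ x ∈ S₁ ∨ x ∈ S₂)
    (hnc : NoncrossingList G ((List.finRange k).flatMap (fun i => [a i, b i]))) :
    (∀ x ∈ Finset.univ.image a, ∀ y ∈ Finset.univ.image a,
      (supG m₁ m₂).Reachable x y → x = y) ∧
    (∀ x ∈ Finset.univ.image b, ∀ y ∈ Finset.univ.image b,
      (supG m₁ m₂).Reachable x y → x = y) := by
  have ha : ∀ i : Fin k, ((List.finRange k).flatMap (fun i => [a i, b i]))[2 * (i : ℕ)]?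
      = some (a i) := by
    intro i; rw [flat_even]; simp
  have hb' : ∀ i : Fin k, ((List.finRange k).flatMap (fun i => [a i, b i]))[2 * (i : ℕ) + 1]?
      = some (b i) := by
    intro i; rw [flat_odd]; simp
  have hT' : ∀ x, x ∈ ((List.finRange k).flatMap (fun i => [a i, b i])) ↔ x ∈ S₁ ∨ x ∈ S₂ := by
    intro x
    rw [← hT]
    simp only [List.mem_flatMap, List.mem_finRange, true_and, List.mem_cons, List.not_mem_nil,
      or_false, Finset.mem_image, Finset.mem_univ, ← exists_or]
    exact exists_congr fun i => or_congr eq_comm eq_comm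
  have key := list_parity hb h₁ h₂ hS₁ hS₂ hd _ hL hT' hnc
  generalize ((List.finRange k).flatMap (fun i => [a i, b i])) = L at *
  constructor
  · intro x hx y hy hr
    obtain ⟨i, -, rfl⟩ := Finset.mem_image.1 hx
    obtain ⟨j, -, rfl⟩ := Finset.mem_image.1 hy
    have main : ∀ i j : Fin k, i < j → ¬ (supG m₁ m₂).Reachable (a i) (a j) := by
      intro i j hij hr
      obtain ⟨hi, ei⟩ := List.getElem?_eq_some_iff.1 (ha i)
      obtain ⟨hj, ej⟩ := List.getElem?_eq_some_iff.1 (ha j)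
      have hij' : (i : ℕ) < j := hij
      have := key ⟨_, hi⟩ ⟨_, hj⟩ (by rw [Fin.mk_lt_mk]; omega) (by
        simp only [List.get_eq_getElem]; rw [ei, ej]; exact hr)
      rw [Nat.odd_iff] at this
      simp only at this
      omega
    rcases lt_trichotomy i j with h | h | h
    · exact absurd hr (main i j h)
    · rw [h]
    · exact absurd hr.symm (main j i h)
  · intro x hx y hy hr
    obtain ⟨i, -, rfl⟩ := Finset.mem_image.1 hx
    obtain ⟨j, -, rfl⟩ := Finset.mem_image.1 hy
    have main : ∀ i j : Fin k, i < j → ¬ (supG m₁ m₂).Reachable (b i) (b j) := by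
      intro i j hij hr
      obtain ⟨hi, ei⟩ := List.getElem?_eq_some_iff.1 (hb' i)
      obtain ⟨hj, ej⟩ := List.getElem?_eq_some_iff.1 (hb' j)
      have hij' : (i : ℕ) < j := hij
      have := key ⟨_, hi⟩ ⟨_, hj⟩ (by rw [Fin.mk_lt_mk]; omega) (by
        simp only [List.get_eq_getElem]; rw [ei, ej]; exact hr)
      rw [Nat.odd_iff] at this
      simp only at this
      omega
    rcases lt_trichotomy i j with h | h | h
    · exact absurd hr (main i j h)
    · rw [h]
    · exact absurd hr.symm (main j i h)

open Classical in
/-- vertices in components meeting `D` -/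
noncomputable def reachSet {α : Type*} [Fintype α] [DecidableEq α] (D : Finset α)
    (m₁ m₂ : Finset (Sym2 α)) : Finset α :=
  Finset.univ.filter (fun v => ∃ x ∈ D, (supG m₁ m₂).Reachable x v)

lemma mem_reachSet {α : Type*} [Fintype α] [DecidableEq α] {D : Finset α}
    {m₁ m₂ : Finset (Sym2 α)} {v : α} :
    v ∈ reachSet D m₁ m₂ ↔ ∃ x ∈ D, (supG m₁ m₂).Reachable x v := by
  simp [reachSet]

lemma reachSet_swE {α : Type*} [Fintype α] [DecidableEq α] (C D : Finset α)
    (m₁ m₂ : Finset (Sym2 α)) :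
    reachSet D (swE C m₁ m₂) (swE C m₂ m₁) = reachSet D m₁ m₂ := by
  unfold reachSet
  rw [supG_swE]

lemma reachSet_closed {α : Type*} [Fintype α] [DecidableEq α] (D : Finset α)
    (m₁ m₂ : Finset (Sym2 α)) :
    ClosedE (reachSet D m₁ m₂) m₁ ∧ ClosedE (reachSet D m₁ m₂) m₂ := by
  constructor
  · intro e he u hu v hv h
    obtain ⟨x, hx, hr⟩ := mem_reachSet.1 h
    exact mem_reachSet.2 ⟨x, hx, hr.trans (supG_reach (Finset.mem_union_left _ he) hu hv)⟩
  · intro e he u hu v hv h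
    obtain ⟨x, hx, hr⟩ := mem_reachSet.1 h
    exact mem_reachSet.2 ⟨x, hx, hr.trans (supG_reach (Finset.mem_union_right _ he) hu hv)⟩

/-- the exchange map on pairs of matchings -/
noncomputable def swP {α : Type*} [Fintype α] [DecidableEq α] (D : Finset α)
    (p : Finset (Sym2 α) × Finset (Sym2 α)) : Finset (Sym2 α) × Finset (Sym2 α) :=
  (swE (reachSet D p.1 p.2) p.1 p.2, swE (reachSet D p.1 p.2) p.2 p.1)

lemma swP_swP {α : Type*} [Fintype α] [DecidableEq α] (D : Finset α)
    (p : Finset (Sym2 α) × Finset (Sym2 α)) : swP D (swP D p) = p := by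
  unfold swP
  simp only [reachSet_swE, swE_swE]

lemma swP_pm {α : Type*} [Fintype α] [DecidableEq α] {G : SimpleGraph α} (D : Finset α)
    {S₁ S₂ T₁ T₂ : Finset α} (p : Finset (Sym2 α) × Finset (Sym2 α))
    (h₁ : IsPMOn G (Finset.univ \ S₁) p.1) (h₂ : IsPMOn G (Finset.univ \ S₂) p.2)
    (hT₁ : ∀ v, v ∈ T₁ ↔ (v ∈ S₁ ∧ v ∉ reachSet D p.1 p.2) ∨ (v ∈ S₂ ∧ v ∈ reachSet D p.1 p.2))
    (hT₂ : ∀ v, v ∈ T₂ ↔ (v ∈ S₂ ∧ v ∉ reachSet D p.1 p.2) ∨ (v ∈ S₁ ∧ v ∈ reachSet D p.1 p.2)) :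
    IsPMOn G (Finset.univ \ T₁) (swP D p).1 ∧ IsPMOn G (Finset.univ \ T₂) (swP D p).2 := by
  obtain ⟨c₁, c₂⟩ := reachSet_closed D p.1 p.2
  constructor
  · convert swE_pm h₁ h₂ c₁ c₂ using 1
    swap
    · rfl
    ext v
    have := hT₁ v
    simp only [Finset.mem_sdiff, Finset.mem_univ, true_and, Finset.mem_union, Finset.mem_inter]
    tauto
  · convert swE_pm h₂ h₁ c₂ c₁ using 1
    swap
    · rfl
    ext v
    have := hT₂ v
    simp only [Finset.mem_sdiff, Finset.mem_univ, true_and, Finset.mem_union, Finset.mem_inter]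
    tauto

end Helpers

/-- Condensation for unbalanced bipartite graphs (Corollary 2.9). -/
theorem unbalanced_bipartite_condensation {α R : Type*} [Fintype α] [DecidableEq α]
    [CommRing R] (G : SimpleGraph α) (w : Sym2 α → R) (n k : ℕ)
    (U V : Finset α) (hbip : IsBipartition G U V)
    (hU : U.card = n + k) (hV : V.card = n)
    (hk2 : 2 ≤ k) (hkn : k ≤ n)
    (a b : Fin k → α)
    (hdist : ((List.finRange k).flatMap (fun i => [a i, b i])).Nodup)
    (hnc : NoncrossingList G ((List.finRange k).flatMap (fun i => [a i, b i])))
    (A B : Finset α) (hA : A = Finset.univ.image a) (hB : B = Finset.univ.image b)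
    (hAU : A ⊆ U) (hBU : B ⊆ U)
    (A₁ A₂ : Finset α) (hpart : A₁ ∪ A₂ = A) (hdisj : Disjoint A₁ A₂) :
    pmSum G w (Finset.univ \ A) * pmSum G w (Finset.univ \ B) =
    ∑ Y ∈ B.powerset.filter (fun Y => Y.card = k - A₁.card),
        pmSum G w (Finset.univ \ (A₁ ∪ Y)) *
          pmSum G w (Finset.univ \ (A₂ ∪ (B \ Y))) := by
  classical
  have hAB : ∀ v, v ∈ A → v ∉ B := by
    rw [hA, hB]
    intro v hv hv'
    obtain ⟨i, -, rfl⟩ := Finset.mem_image.1 hv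
    obtain ⟨j, -, e⟩ := Finset.mem_image.1 hv'
    have ha : ((List.finRange k).flatMap (fun i => [a i, b i]))[2 * (i : ℕ)]? = some (a i) := by
      rw [flat_even]; simp
    have hb : ((List.finRange k).flatMap (fun i => [a i, b i]))[2 * (j : ℕ) + 1]?
        = some (b j) := by
      rw [flat_odd]; simp
    obtain ⟨hi, ei⟩ := List.getElem?_eq_some_iff.1 ha
    obtain ⟨hj, ej⟩ := List.getElem?_eq_some_iff.1 hb
    have := (hdist.getElem_inj_iff (hi := hi) (hj := hj)).1 (by rw [ei, ej, e])
    omega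
  have hA12 : ∀ v, v ∈ A ↔ v ∈ A₁ ∨ v ∈ A₂ := fun v => by rw [← hpart, Finset.mem_union]
  have hd12 : ∀ v, v ∈ A₁ → v ∉ A₂ := fun v hv => Finset.disjoint_left.1 hdisj hv
  -- forward facts
  have fwd : ∀ p : Finset (Sym2 α) × Finset (Sym2 α), IsPMOn G (Finset.univ \ A) p.1 →
      IsPMOn G (Finset.univ \ B) p.2 →
      (B ∩ reachSet A₂ p.1 p.2).card = k - A₁.card ∧
      IsPMOn G (Finset.univ \ (A₁ ∪ (B ∩ reachSet A₂ p.1 p.2))) (swP A₂ p).1 ∧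
      IsPMOn G (Finset.univ \ (A₂ ∪ (B \ (B ∩ reachSet A₂ p.1 p.2)))) (swP A₂ p).2 := by
    intro p h₁ h₂
    obtain ⟨d1, d2, d3, d4⟩ := comp_facts hbip h₁ h₂ hAU hBU
    have f1 : ∀ v ∈ A₁, v ∉ reachSet A₂ p.1 p.2 := by
      intro v hv h
      obtain ⟨x, hx, hr⟩ := mem_reachSet.1 h
      have := d1 x ((hA12 x).2 (Or.inr hx)) v ((hA12 v).2 (Or.inl hv)) hr
      exact hd12 v hv (this ▸ hx)
    have f4 : ∀ v ∈ A₂, v ∈ reachSet A₂ p.1 p.2 := fun v hv =>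
      mem_reachSet.2 ⟨v, hv, SimpleGraph.Reachable.refl v⟩
    have hpm := swP_pm (T₁ := A₁ ∪ (B ∩ reachSet A₂ p.1 p.2))
      (T₂ := A₂ ∪ (B \ (B ∩ reachSet A₂ p.1 p.2))) A₂ p h₁ h₂
      (by
        intro v
        have := f1 v
        have := f4 v
        have := hA12 v
        simp only [Finset.mem_union, Finset.mem_inter]
        tauto)
      (by
        intro v
        have := f1 v
        have := f4 v
        have := hA12 v
        simp only [Finset.mem_union, Finset.mem_inter, Finset.mem_sdiff]
        tauto)
    refine ⟨?_, hpm⟩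
    have e1 := pm_card hbip hpm.1
    have e2 := pm_card (bip_symm hbip) hpm.1
    have hsub : A₁ ∪ (B ∩ reachSet A₂ p.1 p.2) ⊆ U :=
      Finset.union_subset (fun v hv => hAU ((hA12 v).2 (Or.inl hv)))
        (fun v hv => hBU (Finset.mem_inter.1 hv).1)
    have e3 : (Finset.univ \ (A₁ ∪ (B ∩ reachSet A₂ p.1 p.2))) ∩ V = V := by
      rw [Finset.inter_eq_right]
      intro v hv
      rw [Finset.mem_sdiff]
      exact ⟨Finset.mem_univ v, fun h => Finset.disjoint_left.1 hbip.1 (hsub h) hv⟩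
    have e4 : (Finset.univ \ (A₁ ∪ (B ∩ reachSet A₂ p.1 p.2))) ∩ U =
        U \ (A₁ ∪ (B ∩ reachSet A₂ p.1 p.2)) := by
      ext v
      simp only [Finset.mem_inter, Finset.mem_sdiff, Finset.mem_univ, true_and]
      tauto
    rw [e3, hV] at e2
    rw [e4, Finset.card_sdiff_of_subset hsub, ← e2, hU] at e1
    have e5 := Finset.card_le_card hsub
    rw [Finset.card_union_of_disjoint] at e1 e5
    · omega
    · rw [Finset.disjoint_left]
      intro v hv hv'
      exact hAB v ((hA12 v).2 (Or.inl hv)) (Finset.mem_inter.1 hv').1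
    · rw [Finset.disjoint_left]
      intro v hv hv'
      exact hAB v ((hA12 v).2 (Or.inl hv)) (Finset.mem_inter.1 hv').1
  -- backward facts
  have bwd : ∀ (Y : Finset α) (p : Finset (Sym2 α) × Finset (Sym2 α)), Y ⊆ B →
      IsPMOn G (Finset.univ \ (A₁ ∪ Y)) p.1 →
      IsPMOn G (Finset.univ \ (A₂ ∪ (B \ Y))) p.2 →
      B ∩ reachSet A₂ p.1 p.2 = Y ∧
      IsPMOn G (Finset.univ \ A) (swP A₂ p).1 ∧ IsPMOn G (Finset.univ \ B) (swP A₂ p).2 := by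
    intro Y p hY h₁ h₂
    have s1 : A₁ ∪ Y ⊆ U := by
      intro v hv
      rcases Finset.mem_union.1 hv with h | h
      · exact hAU ((hA12 v).2 (Or.inl h))
      · exact hBU (hY h)
    have s2 : A₂ ∪ (B \ Y) ⊆ U := by
      intro v hv
      rcases Finset.mem_union.1 hv with h | h
      · exact hAU ((hA12 v).2 (Or.inr h))
      · exact hBU (Finset.mem_sdiff.1 h).1
    have sd : Disjoint (A₁ ∪ Y) (A₂ ∪ (B \ Y)) := by
      rw [Finset.disjoint_left]
      intro v
      have := hA12 v
      have := hAB v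
      have := hd12 v
      have := @hY v
      simp only [Finset.mem_union, Finset.mem_sdiff]
      tauto
    obtain ⟨d1, d2, d3, d4⟩ := comp_facts hbip h₁ h₂ s1 s2
    obtain ⟨pa, pb⟩ := ab_parity hbip h₁ h₂ s1 s2 sd a b hdist (by
      intro v
      rw [← hA, ← hB]
      have := hA12 v
      have := @hY v
      simp only [Finset.mem_union, Finset.mem_sdiff]
      tauto) hnc
    rw [← hA] at pa
    rw [← hB] at pb
    have f1 : ∀ v ∈ A₁, v ∉ reachSet A₂ p.1 p.2 := by
      intro v hv h
      obtain ⟨x, hx, hr⟩ := mem_reachSet.1 h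
      have := pa x ((hA12 x).2 (Or.inr hx)) v ((hA12 v).2 (Or.inl hv)) hr
      exact hd12 v hv (this ▸ hx)
    have f2 : ∀ v ∈ Y, v ∈ reachSet A₂ p.1 p.2 := by
      intro v hv
      obtain ⟨y, hy, hr⟩ := d3 v (Finset.mem_union_right _ hv)
      rcases Finset.mem_union.1 hy with h | h
      · exact mem_reachSet.2 ⟨y, h, hr.symm⟩
      · obtain ⟨hyB, hyY⟩ := Finset.mem_sdiff.1 h
        exact absurd (pb v (hY hv) y hyB hr ▸ hv) hyY
    have f3 : ∀ v ∈ B, v ∉ Y → v ∉ reachSet A₂ p.1 p.2 := by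
      intro v hv hvY h
      obtain ⟨x, hx, hr⟩ := mem_reachSet.1 h
      have := d2 x (Finset.mem_union_left _ hx) v
        (Finset.mem_union_right _ (Finset.mem_sdiff.2 ⟨hv, hvY⟩)) hr
      exact hAB v ((hA12 v).2 (Or.inr (this ▸ hx))) hv
    have f4 : ∀ v ∈ A₂, v ∈ reachSet A₂ p.1 p.2 := fun v hv =>
      mem_reachSet.2 ⟨v, hv, SimpleGraph.Reachable.refl v⟩
    clear fwd d1 d2 d3 d4 pa pb
    refine ⟨?_, swP_pm A₂ p h₁ h₂ ?_ ?_⟩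
    · ext v
      have := f2 v
      have := f3 v
      have := @hY v
      rw [Finset.mem_inter]
      grind
    · intro v
      have := f1 v
      have := f2 v
      have := f3 v
      have := f4 v
      have := hA12 v
      simp only [Finset.mem_union, Finset.mem_sdiff]
      grind
    · intro v
      have := f1 v
      have := f2 v
      have := f3 v
      have := f4 v
      have := @hY v
      simp only [Finset.mem_union, Finset.mem_sdiff]
      grind
  unfold pmSum
  simp only [Finset.sum_mul_sum, ← Finset.sum_product']
  rw [Finset.sum_sigma']
  refine Finset.sum_bij'
    (fun p _ => (⟨B ∩ reachSet A₂ p.1 p.2, swP A₂ p⟩ :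
      Σ _ : Finset α, Finset (Sym2 α) × Finset (Sym2 α)))
    (fun q _ => swP A₂ q.2) ?_ ?_ ?_ ?_ ?_
  · intro p hp
    simp only [Finset.mem_product, Finset.mem_filter, Finset.mem_univ, true_and] at hp
    obtain ⟨g1, g2, g3⟩ := fwd p hp.1 hp.2
    simp only [Finset.mem_sigma, Finset.mem_product, Finset.mem_filter, Finset.mem_univ, true_and,
      Finset.mem_powerset]
    exact ⟨⟨Finset.inter_subset_left, g1⟩, g2, g3⟩
  · rintro ⟨Y, p⟩ hp
    simp only [Finset.mem_sigma, Finset.mem_product, Finset.mem_filter, Finset.mem_univ, true_and,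
      Finset.mem_powerset] at hp
    simp only [Finset.mem_product, Finset.mem_filter, Finset.mem_univ, true_and]
    exact (bwd Y p hp.1.1 hp.2.1 hp.2.2).2
  · intro p hp
    exact swP_swP A₂ p
  · rintro ⟨Y, p⟩ hp
    simp only [Finset.mem_sigma, Finset.mem_product, Finset.mem_filter, Finset.mem_univ, true_and,
      Finset.mem_powerset] at hp
    have h1 := (bwd Y p hp.1.1 hp.2.1 hp.2.2).1
    have h2 : reachSet A₂ (swP A₂ p).1 (swP A₂ p).2 = reachSet A₂ p.1 p.2 :=
      reachSet_swE _ _ _ _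
    simp only [h2, h1, swP_swP]
  · intro p hp
    exact (swE_prod w _ p.1 p.2).symm
end

section
/- Let G be a finite simple graph, let S be a set of vertices of G, and suppose the induced subgraph H = G−S has exactly one perfect matching M_H. For any two distinct vertices a and b of G, let H_{ab} denote the induced subgraph of G on the symmetric difference of V(H) and {a,b}. Then the number of perfect matchings of H_{ab} equals the number of M_H-alternating paths in G from a to b. -/
section AltHelpers

variable {α : Type*} [DecidableEq α] {G : SimpleGraph α}

theorem pm_partner {s : Finset α} {m : Finset (Sym2 α)} (h : IsPMOn G s m) {x : α} (hx : x ∈ s) :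
    ∃ y, s(x, y) ∈ m ∧ y ∈ s ∧ G.Adj x y := by
  obtain ⟨e, ⟨he, hxe⟩, -⟩ := h.2 x hx
  obtain ⟨y, rfl⟩ := hxe
  exact ⟨y, he, (h.1 _ he).2 y (by simp), (h.1 _ he).1⟩

theorem pm_mem {s : Finset α} {m : Finset (Sym2 α)} (h : IsPMOn G s m) {x y : α}
    (hx : s(x, y) ∈ m) : x ∈ s ∧ y ∈ s ∧ G.Adj x y :=
  ⟨(h.1 _ hx).2 x (by simp), (h.1 _ hx).2 y (by simp), (h.1 _ hx).1⟩

theorem pm_uniq {s : Finset α} {m : Finset (Sym2 α)} (h : IsPMOn G s m) {x : α} {e f : Sym2 α}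
    (he : e ∈ m) (hf : f ∈ m) (hxe : x ∈ e) (hxf : x ∈ f) : e = f :=
  (h.2 x ((h.1 e he).2 x hxe)).unique ⟨he, hxe⟩ ⟨hf, hxf⟩

theorem pm_erase {s : Finset α} {m : Finset (Sym2 α)} (h : IsPMOn G s m) {x y : α}
    (hx : s(x, y) ∈ m) : IsPMOn G (s \ {x, y}) (m.erase s(x, y)) := by
  constructor
  · intro e he
    rw [Finset.mem_erase] at he
    refine ⟨(h.1 e he.2).1, fun v hv => ?_⟩
    have hvs := (h.1 e he.2).2 v hv
    rw [Finset.mem_sdiff]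
    refine ⟨hvs, fun hh => he.1 ?_⟩
    refine pm_uniq h he.2 hx hv ?_
    simpa using hh
  · intro v hv
    rw [Finset.mem_sdiff] at hv
    obtain ⟨e, ⟨he, hve⟩, hu⟩ := h.2 v hv.1
    refine ⟨e, ⟨Finset.mem_erase.2 ⟨?_, he⟩, hve⟩, ?_⟩
    · rintro rfl
      exact hv.2 (by simpa using hve)
    · rintro f ⟨hf, hvf⟩
      exact hu f ⟨(Finset.mem_erase.1 hf).2, hvf⟩

theorem pm_insert {s : Finset α} {m : Finset (Sym2 α)} (h : IsPMOn G s m) {x y : α}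
    (hx : x ∉ s) (hy : y ∉ s) (hxy : G.Adj x y) :
    IsPMOn G (insert x (insert y s)) (insert s(x, y) m) := by
  constructor
  · intro e he
    rw [Finset.mem_insert] at he
    rcases he with rfl | he
    · refine ⟨hxy, fun v hv => ?_⟩
      rcases Sym2.mem_iff.1 hv with rfl | rfl <;> simp
    · exact ⟨(h.1 e he).1, fun v hv => by simp [(h.1 e he).2 v hv]⟩
  · intro v hv
    by_cases hvs : v ∈ s
    · obtain ⟨e, ⟨he, hve⟩, hu⟩ := h.2 v hvs
      refine ⟨e, ⟨by simp [he], hve⟩, ?_⟩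
      rintro f ⟨hf, hvf⟩
      rcases Finset.mem_insert.1 hf with rfl | hf
      · rcases Sym2.mem_iff.1 hvf with rfl | rfl <;> contradiction
      · exact hu f ⟨hf, hvf⟩
    · refine ⟨s(x, y), ⟨by simp, ?_⟩, ?_⟩
      · simp only [Finset.mem_insert] at hv
        rw [Sym2.mem_iff]; tauto
      · rintro f ⟨hf, hvf⟩
        rcases Finset.mem_insert.1 hf with rfl | hf
        · rfl
        · exact absurd ((h.1 f hf).2 v hvf) hvs

theorem chain_congr {M M' : Finset (Sym2 α)} : ∀ {l : List (Sym2 α)},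
    (∀ e ∈ l, (e ∈ M ↔ e ∈ M')) →
    (l.IsChain (fun e f => e ∈ M ↔ f ∉ M) ↔ l.IsChain (fun e f => e ∈ M' ↔ f ∉ M'))
  | [], _ => by simp
  | [_], _ => by simp
  | e :: f :: l, h => by
    have := chain_congr (l := f :: l) (fun e he => h e (List.mem_cons_of_mem _ he))
    rw [List.isChain_cons_cons, List.isChain_cons_cons, this, h e (by simp), h f (by simp)]

theorem alt_cons_cons {H : Finset α} {M : Finset (Sym2 α)} {a c d b : α}
    (h : G.Adj a c) (h' : G.Adj c d) (p : G.Walk d b) :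
    IsAltPath G H M (.cons h (.cons h' p)) ↔
      a ∉ (SimpleGraph.Walk.cons h' p).support ∧ (SimpleGraph.Walk.cons h' p).IsPath ∧
      (s(a, c) ∈ M ↔ a ∈ H) ∧ (s(a, c) ∈ M ↔ s(c, d) ∉ M) ∧
      (SimpleGraph.Walk.cons h' p).edges.IsChain (fun e f => e ∈ M ↔ f ∉ M) ∧
      (∀ e ∈ (SimpleGraph.Walk.cons h' p).edges.getLast?, (e ∈ M ↔ b ∈ H)) := by
  unfold IsAltPath
  rw [SimpleGraph.Walk.cons_isPath_iff]
  simp only [SimpleGraph.Walk.edges_cons, List.Chain', List.isChain_cons_cons, List.head?_cons,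
    List.getLast?_cons_cons, Option.mem_some_iff, forall_eq', ne_eq, reduceCtorEq,
    not_false_eq_true]
  tauto

theorem alt_single {H : Finset α} {M : Finset (Sym2 α)} {a b : α} (h : G.Adj a b) :
    IsAltPath G H M (.cons h .nil) ↔ (s(a, b) ∈ M ↔ a ∈ H) ∧ (s(a, b) ∈ M ↔ b ∈ H) := by
  simp [IsAltPath, List.Chain', h.ne]

theorem alt_step1 {H : Finset α} {M : Finset (Sym2 α)} (hM : IsPMOn G H M) {a c b : α}
    (h : G.Adj a c) (hac : s(a, c) ∈ M) (p : G.Walk c b) (hcb : c ≠ b) :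
    IsAltPath G H M (.cons h p) ↔
      a ∉ p.support ∧ IsAltPath G (H \ {a, c}) (M.erase s(a, c)) p := by
  cases p with
  | nil => exact absurd rfl hcb
  | @cons _ d _ h' p =>
    rw [alt_cons_cons]
    refine and_congr_right fun hap => ?_
    have hab : b ≠ a := by
      rintro rfl
      exact hap (SimpleGraph.Walk.end_mem_support _)
    have hE : ∀ e ∈ (SimpleGraph.Walk.cons h' p).edges, (e ∈ M ↔ e ∈ M.erase s(a, c)) := by
      intro e he
      rw [Finset.mem_erase]
      refine ⟨fun hh => ⟨?_, hh⟩, And.right⟩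
      rintro rfl
      exact hap (SimpleGraph.Walk.fst_mem_support_of_mem_edges _ he)
    have hL : (∀ e ∈ (SimpleGraph.Walk.cons h' p).edges.getLast?, (e ∈ M ↔ b ∈ H)) ↔
        (∀ e ∈ (SimpleGraph.Walk.cons h' p).edges.getLast?,
          (e ∈ M.erase s(a, c) ↔ b ∈ H \ {a, c})) := by
      refine forall₂_congr fun e he => ?_
      rw [hE e (List.mem_of_getLast? he)]
      simp [hab, hcb.symm]
    unfold IsAltPath
    rw [hL, chain_congr hE, hE s(c, d) (by simp)]
    have := (pm_mem hM hac).1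
    simp only [List.Chain', SimpleGraph.Walk.edges_cons, List.head?_cons, Option.mem_some_iff,
      forall_eq']
    simp [hac, this]
    tauto

theorem alt_step2 {H : Finset α} {M : Finset (Sym2 α)} (hM : IsPMOn G H M) {a c b : α}
    (h : G.Adj a c) (ha : a ∉ H) (p : G.Walk c b) (hcb : c ≠ b) :
    IsAltPath G H M (.cons h p) ↔
      a ∉ p.support ∧ c ∈ H ∧ IsAltPath G H M p := by
  cases p with
  | nil => exact absurd rfl hcb
  | @cons _ d _ h' p =>
    rw [alt_cons_cons]
    refine and_congr_right fun hap => ?_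
    have hac : s(a, c) ∉ M := fun hh => ha (pm_mem hM hh).1
    have hcd : s(c, d) ∈ M → c ∈ H := fun hh => (pm_mem hM hh).1
    unfold IsAltPath
    simp only [List.Chain', SimpleGraph.Walk.edges_cons, List.head?_cons, Option.mem_some_iff,
      forall_eq']
    simp [hac, ha]
    tauto

theorem alt_to_pm {a b : α} (p : G.Walk a b) : ∀ (H : Finset α) (M : Finset (Sym2 α)),
    IsPMOn G H M → IsAltPath G H M p →
    IsPMOn G (symmDiff H {a, b}) (symmDiff M p.edges.toFinset) := by
  induction p with
  | nil => intro H M _ h; exact absurd rfl h.2.1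
  | @cons a c b h p ih =>
    intro H M hM hP
    by_cases hcb : c = b
    · subst hcb
      have : p = .nil := by
        have := hP.1.of_cons
        rwa [SimpleGraph.Walk.isPath_iff_eq_nil] at this
      subst this
      rw [alt_single] at hP
      by_cases hac : s(a, c) ∈ M
      · have ha := hP.1.1 hac
        have hc := hP.2.1 hac
        convert pm_erase hM hac using 1
        · ext v; simp only [Finset.mem_symmDiff, Finset.mem_sdiff, Finset.mem_insert, Finset.mem_singleton]; grind
        · ext v; simp only [Finset.mem_symmDiff, Finset.mem_erase]; simp; grind
      · have ha : a ∉ H := fun hh => hac (hP.1.2 hh)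
        have hc : c ∉ H := fun hh => hac (hP.2.2 hh)
        convert pm_insert hM ha hc h using 1
        · ext v; simp only [Finset.mem_symmDiff, Finset.mem_insert, Finset.mem_singleton]; grind
        · ext v; simp only [Finset.mem_symmDiff, Finset.mem_insert]; simp; grind
    · by_cases hac : s(a, c) ∈ M
      · rw [alt_step1 hM h hac p hcb] at hP
        have := ih _ _ (pm_erase hM hac) hP.2
        have hab : b ≠ a := by
          rintro rfl
          exact hP.1 (SimpleGraph.Walk.end_mem_support _)
        have hm := pm_mem hM hac
        have hca : a ≠ c := h.ne
        clear ih
        have hne : s(a, c) ∉ p.edges := fun he =>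
          hP.1 (SimpleGraph.Walk.fst_mem_support_of_mem_edges _ he)
        convert this using 1
        · ext v; simp only [Finset.mem_symmDiff, Finset.mem_sdiff, Finset.mem_insert, Finset.mem_singleton]; grind
        · ext v; simp only [Finset.mem_symmDiff, Finset.mem_erase, List.mem_toFinset, SimpleGraph.Walk.edges_cons, List.mem_cons]; grind
      · have ha : a ∉ H := by
          intro hh
          apply hac
          have := hP.2.2.2.1
          simpa [hh] using this
        rw [alt_step2 hM h ha p hcb] at hP
        have := ih _ _ hM hP.2.2
        clear ih
        have hab : b ≠ a := by
          rintro rfl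
          exact hP.1 (SimpleGraph.Walk.end_mem_support _)
        have hne : s(a, c) ∉ p.edges := fun he =>
          hP.1 (SimpleGraph.Walk.fst_mem_support_of_mem_edges _ he)
        have hc := hP.2.1
        have hca : a ≠ c := h.ne
        convert pm_insert this (x := a) (y := c) ?_ ?_ h using 1
        · ext v; simp only [Finset.mem_symmDiff, Finset.mem_insert, Finset.mem_singleton]; grind
        · ext v; simp only [Finset.mem_symmDiff, Finset.mem_insert, List.mem_toFinset, SimpleGraph.Walk.edges_cons, List.mem_cons]; grind
        · simp only [Finset.mem_symmDiff, Finset.mem_insert, Finset.mem_singleton]; grind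
        · simp only [Finset.mem_symmDiff, Finset.mem_insert, Finset.mem_singleton]; grind

theorem path_ext {a b : α} (p : G.Walk a b) : ∀ q : G.Walk a b, p.IsPath → q.IsPath →
    p.edges.toFinset = q.edges.toFinset → p = q := by
  induction p with
  | nil =>
    intro q _ hq _
    rw [SimpleGraph.Walk.isPath_iff_eq_nil] at hq
    exact hq.symm
  | @cons a c b h p ih =>
    intro q hp hq he
    cases q with
    | nil => simp at he
    | @cons _ d _ h' q =>
      rw [SimpleGraph.Walk.cons_isPath_iff] at hp hq
      have hpn : ∀ x, s(a, x) ∉ p.edges := fun x he =>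
        hp.2 (SimpleGraph.Walk.fst_mem_support_of_mem_edges _ he)
      have hqn : ∀ x, s(a, x) ∉ q.edges := fun x he =>
        hq.2 (SimpleGraph.Walk.fst_mem_support_of_mem_edges _ he)
      have h1 : s(a, c) ∈ (SimpleGraph.Walk.cons h' q).edges.toFinset := by
        rw [← he]; simp
      have hcd : c = d := by
        simp only [List.mem_toFinset, SimpleGraph.Walk.edges_cons, List.mem_cons, hqn, or_false] at h1
        exact Sym2.congr_right.1 h1
      subst hcd
      congr 1
      refine ih q hp.1 hq.1 ?_
      ext e
      have h2 := Finset.ext_iff.1 he e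
      simp only [List.mem_toFinset, SimpleGraph.Walk.edges_cons, List.mem_cons] at h2 ⊢
      have h3 := hpn c
      have h4 := hqn c
      grind

theorem pm_to_alt (n : ℕ) : ∀ (H : Finset α) (M N : Finset (Sym2 α)) (a b : α),
    2 * H.card + (if a ∈ H then 0 else 1) = n →
    IsPMOn G H M → (∀ m, IsPMOn G H m → m = M) → a ≠ b →
    IsPMOn G (symmDiff H {a, b}) N →
    ∃ p : G.Walk a b, IsAltPath G H M p ∧ symmDiff M p.edges.toFinset = N ∧
      ∀ v ∈ p.support, v ∈ H ∨ v = a ∨ v = b := by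
  induction n using Nat.strong_induction_on with
  | _ n ih =>
  intro H M N a b hn hM hu hab hN
  by_cases ha : a ∈ H
  · obtain ⟨c, hac, hc, h⟩ := pm_partner hM ha
    have hca : a ≠ c := h.ne
    have haN : ∀ x, s(a, x) ∉ N := by
      intro x hx
      have := (pm_mem hN hx).1
      simp only [Finset.mem_symmDiff, Finset.mem_insert, Finset.mem_singleton] at this
      grind
    by_cases hcb : c = b
    · subst hcb
      have hN' : insert s(a, c) N = M := by
        apply hu
        convert pm_insert hN (x := a) (y := c) ?_ ?_ h using 1
        · ext v; simp only [Finset.mem_symmDiff, Finset.mem_insert, Finset.mem_singleton]; grind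
        · simp only [Finset.mem_symmDiff, Finset.mem_insert, Finset.mem_singleton]; grind
        · simp only [Finset.mem_symmDiff, Finset.mem_insert, Finset.mem_singleton]; grind
      refine ⟨.cons h .nil, ?_, ?_, ?_⟩
      · rw [alt_single]; simp [hac, ha, hc]
      · have := haN c
        ext v
        rw [← hN']
        simp only [Finset.mem_symmDiff, Finset.mem_insert, List.mem_toFinset, SimpleGraph.Walk.edges_cons, SimpleGraph.Walk.edges_nil, List.mem_singleton]; grind
      · simp
    · have hM' := pm_erase hM hac
      have hcard : (H \ {a, c}).card < H.card := by
        apply Finset.card_lt_card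
        refine ⟨Finset.sdiff_subset, fun hh => ?_⟩
        have := hh ha
        simp at this
      have hN' : IsPMOn G (symmDiff (H \ {a, c}) {c, b}) N := by
        convert hN using 1
        ext v; simp only [Finset.mem_symmDiff, Finset.mem_sdiff, Finset.mem_insert, Finset.mem_singleton]; grind
      have hu' : ∀ m, IsPMOn G (H \ {a, c}) m → m = M.erase s(a, c) := by
        intro m hm
        have : insert s(a, c) m = M := by
          apply hu
          convert pm_insert hm (x := a) (y := c) (by simp) (by simp) h using 1
          ext v; simp only [Finset.mem_sdiff, Finset.mem_insert, Finset.mem_singleton]; grind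
        rw [← this, Finset.erase_insert]
        intro hh
        simpa using (pm_mem hm hh).1
      obtain ⟨p, hp, hpN, hps⟩ := ih _ (by rw [← hn]; split_ifs <;> omega) (H \ {a, c})
        (M.erase s(a, c)) N c b rfl hM' hu' hcb hN'
      have hap : a ∉ p.support := by
        intro hh
        have := hps a hh
        simp [hca, hab] at this
      have hne : s(a, c) ∉ p.edges := fun he =>
          hap (SimpleGraph.Walk.fst_mem_support_of_mem_edges _ he)
      refine ⟨.cons h p, (alt_step1 hM h hac p hcb).2 ⟨hap, hp⟩, ?_, ?_⟩
      · rw [← hpN]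
        ext v; simp only [Finset.mem_symmDiff, Finset.mem_erase, List.mem_toFinset, SimpleGraph.Walk.edges_cons, List.mem_cons]; grind
      · intro v hv
        rw [SimpleGraph.Walk.support_cons, List.mem_cons] at hv
        rcases hv with rfl | hv
        · simp
        · have := hps v hv
          simp only [Finset.mem_sdiff] at this
          grind
  · have haH : a ∈ symmDiff H {a, b} := by
      simp [Finset.mem_symmDiff, ha]
    obtain ⟨c, hac, hc, h⟩ := pm_partner hN haH
    have hca : a ≠ c := h.ne
    have hacM : ∀ x, s(a, x) ∉ M := fun x hh => ha (pm_mem hM hh).1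
    have hNe := pm_erase hN hac
    by_cases hcb : c = b
    · subst hcb
      have hcH : c ∉ H := by
        simp only [Finset.mem_symmDiff, Finset.mem_insert, Finset.mem_singleton] at hc; grind
      have hN' : N.erase s(a, c) = M := by
        apply hu
        convert hNe using 1
        ext v; simp only [Finset.mem_symmDiff, Finset.mem_sdiff, Finset.mem_insert, Finset.mem_singleton]; grind
      refine ⟨.cons h .nil, ?_, ?_, ?_⟩
      · rw [alt_single]; simp [hacM, ha, hcH]
      · ext v
        rw [← hN']
        simp only [Finset.mem_symmDiff, Finset.mem_erase, List.mem_toFinset, SimpleGraph.Walk.edges_cons, SimpleGraph.Walk.edges_nil, List.mem_singleton]; grind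
      · simp
    · have hcH : c ∈ H := by
        simp only [Finset.mem_symmDiff, Finset.mem_insert, Finset.mem_singleton] at hc; grind
      have hN' : IsPMOn G (symmDiff H {c, b}) (N.erase s(a, c)) := by
        convert hNe using 1
        ext v; simp only [Finset.mem_symmDiff, Finset.mem_sdiff, Finset.mem_insert, Finset.mem_singleton]; grind
      obtain ⟨p, hp, hpN, hps⟩ := ih _ (by rw [← hn]; simp [ha, hcH]) H M _ c b rfl hM hu hcb hN'
      have hap : a ∉ p.support := by
        intro hh
        have := hps a hh
        simp [hca, hab, ha] at this
      have hne : s(a, c) ∉ p.edges := fun he =>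
          hap (SimpleGraph.Walk.fst_mem_support_of_mem_edges _ he)
      refine ⟨.cons h p, (alt_step2 hM h ha p hcb).2 ⟨hap, hcH, hp⟩, ?_, ?_⟩
      · have h0 := hacM c
        ext v
        have := Finset.ext_iff.1 hpN v
        simp only [Finset.mem_symmDiff, Finset.mem_erase, List.mem_toFinset, SimpleGraph.Walk.edges_cons, List.mem_cons] at this ⊢; grind
      · intro v hv
        rw [SimpleGraph.Walk.support_cons, List.mem_cons] at hv
        rcases hv with rfl | hv
        · simp
        · have := hps v hv
          grind

end AltHelpers

/-- (Lemma 3.2.) If `H = G − S` has a unique perfect matching `MH`,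
then the number of perfect matchings of the induced subgraph `H_{ab}` of `G` on the
symmetric difference of `V(H)` and `{a, b}` equals the number of `MH`-alternating paths
in `G` from `a` to `b`. -/
theorem alt_path_count_eq_pmCount {α : Type*} [Fintype α] [DecidableEq α]
    (G : SimpleGraph α) (S : Finset α) (MH : Finset (Sym2 α))
    (hMH : IsPMOn G (Finset.univ \ S) MH)
    (huniq : ∀ m, IsPMOn G (Finset.univ \ S) m → m = MH)
    (a b : α) (hab : a ≠ b) :
    pmCount G (symmDiff (Finset.univ \ S) {a, b}) =
      Nat.card {P : G.Walk a b // IsAltPath G (Finset.univ \ S) MH P} := by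
  unfold pmCount
  symm
  refine Nat.card_congr (Equiv.ofBijective
    (fun P => ⟨symmDiff MH P.1.edges.toFinset, alt_to_pm P.1 _ _ hMH P.2⟩) ⟨?_, ?_⟩)
  · rintro ⟨p, hp⟩ ⟨q, hq⟩ hpq
    have h1 := congrArg Subtype.val hpq
    exact Subtype.ext (path_ext p q hp.1 hq.1 (symmDiff_right_injective MH h1))
  · rintro ⟨N, hN⟩
    obtain ⟨p, hp, hpN, -⟩ := pm_to_alt _ _ MH N a b rfl hMH huniq hab hN
    exact ⟨⟨p, hp⟩, Subtype.ext hpN⟩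
end

section
/- Let G be a finite simple graph, let A = {a_1,…,a_n} be a set of distinct vertices partitioned into disjoint subsets A_K and A_H, and suppose the induced subgraph H = G−A_K has exactly one perfect matching M_H. Then the number of perfect matchings of K = G−A_H equals the number of families of pairwise vertex-disjoint M_H-alternating paths in G whose set of path-endpoints is exactly A (each vertex of A being an endpoint of exactly one path of the family). -/
namespace AltNest

variable {α : Type*} {G : SimpleGraph α} {M : Finset (Sym2 α)}

abbrev Alt (M : Finset (Sym2 α)) (l : List (Sym2 α)) : Prop :=
  l.IsChain (fun e f => e ∈ M ↔ f ∉ M)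

lemma Alt.rev {l : List (Sym2 α)} (h : Alt M l) : Alt M l.reverse := by
  rw [Alt, List.isChain_reverse]
  exact List.IsChain.imp (fun a b hab => by tauto) h

lemma mem_supp {x y v : α} {p : G.Walk x y} {e : Sym2 α} (he : e ∈ p.edges) (hv : v ∈ e) :
    v ∈ p.support := SimpleGraph.Walk.mem_support_of_mem_edges he hv

lemma head_edge {x y : α} (p : G.Walk x y) (hp : p.IsPath) (hne : p.edges ≠ []) :
    ∃ e ∈ p.edges.head?, e ∈ p.edges ∧ x ∈ e ∧ ∀ f ∈ p.edges, x ∈ f → f = e := by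
  cases p with
  | nil => simp at hne
  | @cons _ w _ h q =>
    rw [SimpleGraph.Walk.cons_isPath_iff] at hp
    refine ⟨s(x, w), by simp, by simp, by simp, ?_⟩
    intro f hf hx
    rw [SimpleGraph.Walk.edges_cons, List.mem_cons] at hf
    rcases hf with hf | hf
    · exact hf
    · exact absurd (mem_supp hf hx) hp.2

lemma last_edge {x y : α} (p : G.Walk x y) (hp : p.IsPath) (hne : p.edges ≠ []) :
    ∃ e ∈ p.edges.getLast?, e ∈ p.edges ∧ y ∈ e ∧ ∀ f ∈ p.edges, y ∈ f → f = e := by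
  have := head_edge p.reverse hp.reverse (by simpa using hne)
  simpa using this

lemma interior_edges {x y : α} (p : G.Walk x y) (hp : p.IsPath) (hc : Alt M p.edges) {v : α}
    (hv : v ∈ p.support) (hx : v ≠ x) (hy : v ≠ y) :
    (∃ e ∈ p.edges, v ∈ e ∧ e ∈ M) ∧ (∃ e ∈ p.edges, v ∈ e ∧ e ∉ M ∧
      ∀ f ∈ p.edges, v ∈ f → f ∉ M → f = e) := by
  induction p with
  | nil => simp at hv; exact absurd hv hx
  | @cons x w y h q ih =>
    rw [SimpleGraph.Walk.cons_isPath_iff] at hp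
    rw [SimpleGraph.Walk.edges_cons, Alt, List.isChain_cons] at hc
    rw [SimpleGraph.Walk.support_cons, List.mem_cons] at hv
    have hv := hv.resolve_left hx
    by_cases hw : v = w
    · subst hw
      have hne : q.edges ≠ [] := by
        cases q with
        | nil => simp at hy
        | cons => simp
      obtain ⟨e, he, he1, he2, he3⟩ := head_edge q hp.1 hne
      have hcc := hc.1 e he
      simp only [SimpleGraph.Walk.edges_cons, List.mem_cons]
      by_cases hm : e ∈ M
      · refine ⟨⟨e, by grind⟩, ⟨s(x, v), ?_⟩⟩
        refine ⟨by simp, by simp, by tauto, ?_⟩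
        rintro f (hf | hf) hvf hfM
        · exact hf
        · have := he3 f hf hvf; subst this; exact absurd hm hfM
      · refine ⟨⟨s(x, v), by simp, by simp, by tauto⟩, ⟨e, ?_⟩⟩
        refine ⟨by simp [he1], he2, hm, ?_⟩
        rintro f (hf | hf) hvf hfM
        · subst hf; tauto
        · exact he3 f hf hvf
    · obtain ⟨⟨e, he, he'⟩, ⟨f, hf, hf1, hf2, hf3⟩⟩ := ih hp.1 hc.2 hv hw hy
      simp only [SimpleGraph.Walk.edges_cons, List.mem_cons]
      refine ⟨⟨e, Or.inr he, he'⟩, ⟨f, Or.inr hf, hf1, hf2, ?_⟩⟩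
      rintro g (hg | hg) hvg hgM
      · subst hg; simp at hvg; tauto
      · exact hf3 g hg hvg hgM

/-- properly coloured -/
def Col (M : Finset (Sym2 α)) (D : Set (Sym2 α)) : Prop :=
  ∀ v e f, e ∈ D → f ∈ D → v ∈ e → v ∈ f → (e ∈ M ↔ f ∈ M) → e = f

lemma alt_of_col {D : Set (Sym2 α)} (hD : Col M D) {x y : α} (p : G.Walk x y) (hp : p.IsPath)
    (hpD : ∀ e ∈ p.edges, e ∈ D) : Alt M p.edges := by
  induction p with
  | nil => simp [Alt]
  | @cons x w y h q ih =>
    rw [SimpleGraph.Walk.cons_isPath_iff] at hp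
    simp only [SimpleGraph.Walk.edges_cons, List.mem_cons, forall_eq_or_imp] at hpD
    rw [SimpleGraph.Walk.edges_cons, Alt, List.isChain_cons]
    refine ⟨?_, ih hp.1 hpD.2⟩
    intro e he
    have hne : q.edges ≠ [] := by
      intro h0; rw [h0] at he; simp at he
    obtain ⟨e', he', he1, he2, -⟩ := head_edge q hp.1 hne
    have : e' = e := Option.mem_unique he' he
    subst this
    by_contra hcon
    have := hD w s(x, w) e' hpD.1 (hpD.2 _ he1) (by simp) he2 (by tauto)
    subst this
    exact hp.2 (mem_supp he1 (by simp))

lemma det0 {D : Set (Sym2 α)} (hD : Col M D) {A : Finset α} {x y z : α} (p : G.Walk x y)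
    (q : G.Walk x z) (hp : p.IsPath) (hq : q.IsPath) (hpD : ∀ e ∈ p.edges, e ∈ D)
    (hqD : ∀ e ∈ q.edges, e ∈ D) (hpA : ∀ v ∈ p.support, v ∈ A → v = y)
    (hqA : ∀ v ∈ q.support, v ∈ A → v = z) (hy : y ∈ A) (hz : z ∈ A)
    (hh : ∀ e ∈ p.edges.head?, ∀ f ∈ q.edges.head?, (e ∈ M ↔ f ∈ M)) :
    (⟨y, p⟩ : Σ y, G.Walk x y) = ⟨z, q⟩ := by
  induction p with
  | nil =>
    have := hqA _ (by simp) hy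
    subst this
    rw [SimpleGraph.Walk.isPath_iff_nil, SimpleGraph.Walk.nil_iff_eq_nil] at hq
    rw [hq]
  | @cons x w y h p ih =>
    cases q with
    | nil =>
      have := hpA _ (by simp) hz
      subst this
      rw [SimpleGraph.Walk.isPath_iff_nil, SimpleGraph.Walk.nil_iff_eq_nil] at hp
      cases hp
    | @cons _ w' _ h' q =>
      have ap := alt_of_col hD _ hp hpD
      have aq := alt_of_col hD _ hq hqD
      rw [SimpleGraph.Walk.cons_isPath_iff] at hp hq
      rw [SimpleGraph.Walk.edges_cons, Alt, List.isChain_cons] at ap aq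
      simp only [SimpleGraph.Walk.edges_cons, List.mem_cons, forall_eq_or_imp] at hpD hqD
      simp only [SimpleGraph.Walk.support_cons, List.mem_cons, forall_eq_or_imp] at hpA hqA
      simp only [SimpleGraph.Walk.edges_cons, List.head?_cons, Option.mem_def, Option.some.injEq,
        forall_eq'] at hh
      have := hD x _ _ hpD.1 hqD.1 (by simp) (by simp) hh
      have hw : w = w' := Sym2.congr_right.1 this
      subst hw
      have := ih q hp.1 hq.1 hpD.2 hqD.2 hpA.2 hqA.2 hy (by
        intro e he f hf
        have := ap.1 e he
        have := aq.1 f hf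
        tauto)
      cases this
      rfl

lemma det {D : Set (Sym2 α)} (hD : Col M D) {A : Finset α} {x y z : α} (p : G.Walk x y)
    (q : G.Walk x z) (hp : p.IsPath) (hq : q.IsPath) (hpD : ∀ e ∈ p.edges, e ∈ D)
    (hqD : ∀ e ∈ q.edges, e ∈ D) (hpn : p.edges ≠ []) (hqn : q.edges ≠ [])
    (hpA : ∀ v ∈ p.support, v ∈ A → v = x ∨ v = y)
    (hqA : ∀ v ∈ q.support, v ∈ A → v = x ∨ v = z) (hy : y ∈ A) (hz : z ∈ A)
    (hh : ∀ e ∈ p.edges.head?, ∀ f ∈ q.edges.head?, (e ∈ M ↔ f ∈ M)) :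
    (⟨y, p⟩ : Σ y, G.Walk x y) = ⟨z, q⟩ := by
  cases p with
  | nil => simp at hpn
  | @cons _ w _ h p =>
    cases q with
    | nil => simp at hqn
    | @cons _ w' _ h' q =>
      have ap := alt_of_col hD _ hp hpD
      have aq := alt_of_col hD _ hq hqD
      rw [SimpleGraph.Walk.cons_isPath_iff] at hp hq
      rw [SimpleGraph.Walk.edges_cons, Alt, List.isChain_cons] at ap aq
      simp only [SimpleGraph.Walk.edges_cons, List.mem_cons, forall_eq_or_imp] at hpD hqD
      simp only [SimpleGraph.Walk.support_cons, List.mem_cons, forall_eq_or_imp] at hpA hqA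
      simp only [SimpleGraph.Walk.edges_cons, List.head?_cons, Option.mem_def, Option.some.injEq,
        forall_eq'] at hh
      have := hD x _ _ hpD.1 hqD.1 (by simp) (by simp) hh
      have hw : w = w' := Sym2.congr_right.1 this
      subst hw
      have := det0 (A := A) hD p q hp.1 hq.1 hpD.2 hqD.2
        (fun v hv hA => (hpA.2 v hv hA).resolve_left (by rintro rfl; exact hp.2 hv))
        (fun v hv hA => (hqA.2 v hv hA).resolve_left (by rintro rfl; exact hq.2 hv)) hy hz (by
        intro e he f hf
        have := ap.1 e he
        have := aq.1 f hf
        tauto)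
      cases this
      rfl

lemma walk_closed {S : Set α} {x y u : α} (q : G.Walk x y) (hu : u ∈ q.support) (huS : u ∈ S)
    (hS : ∀ e ∈ q.edges, ∀ v ∈ e, v ∈ S → ∀ w ∈ e, w ∈ S) : x ∈ S := by
  induction q with
  | nil => simp at hu; subst hu; exact huS
  | @cons x w y h q ih =>
    simp only [SimpleGraph.Walk.edges_cons, List.mem_cons, forall_eq_or_imp] at hS
    rw [SimpleGraph.Walk.support_cons, List.mem_cons] at hu
    rcases hu with rfl | hu
    · exact huS
    · exact hS.1 w (by simp) (ih hu hS.2) x (by simp)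

lemma edges_at {D : Set (Sym2 α)} {A : Finset α} (hD : Col M D)
    (hA : ∀ v ∈ A, ∃ e ∈ D, v ∈ e ∧ ∀ f ∈ D, v ∈ f → f = e) {x y : α} (p : G.Walk x y)
    (hp : p.IsPath) (hpn : p.edges ≠ []) (hpD : ∀ e ∈ p.edges, e ∈ D) (hx : x ∈ A) {v : α}
    (hv : v ∈ p.support) (hy : v ≠ y) {f : Sym2 α} (hf : f ∈ D) (hvf : v ∈ f) : f ∈ p.edges := by
  by_cases hvx : v = x
  · subst hvx
    obtain ⟨e, -, he, hve, -⟩ := head_edge p hp hpn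
    obtain ⟨e', -, -, h⟩ := hA v hx
    rw [h f hf hvf, ← h e (hpD e he) hve]
    exact he
  · obtain ⟨⟨e, he, hve, heM⟩, ⟨g, hg, hvg, hgM, -⟩⟩ :=
      interior_edges p hp (alt_of_col hD p hp hpD) hv hvx hy
    by_cases hfM : f ∈ M
    · rw [hD v f e hf (hpD e he) hvf hve (by tauto)]; exact he
    · rw [hD v f g hf (hpD g hg) hvf hvg (by tauto)]; exact hg

lemma edges_at' {D : Set (Sym2 α)} {A : Finset α} (hD : Col M D)
    (hA : ∀ v ∈ A, ∃ e ∈ D, v ∈ e ∧ ∀ f ∈ D, v ∈ f → f = e) {x y : α} (p : G.Walk x y)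
    (hp : p.IsPath) (hpn : p.edges ≠ []) (hpD : ∀ e ∈ p.edges, e ∈ D) (hx : x ∈ A) (hy : y ∈ A)
    {v : α}
    (hv : v ∈ p.support) {f : Sym2 α} (hf : f ∈ D) (hvf : v ∈ f) : f ∈ p.edges := by
  by_cases hvy : v = y
  · have hne : v ≠ x := by
      rintro rfl
      subst hvy
      rw [SimpleGraph.Walk.isPath_iff_nil, SimpleGraph.Walk.nil_iff_eq_nil] at hp
      subst hp
      simp at hpn
    have := edges_at hD hA p.reverse hp.reverse (by simpa using hpn) (by simpa using hpD) hy
      (by simpa using hv) hne hf hvf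
    simpa using this
  · exact edges_at hD hA p hp hpn hpD hx hv hvy hf hvf

lemma int_notA {D : Set (Sym2 α)} {A : Finset α} (hD : Col M D)
    (hA : ∀ v ∈ A, ∃ e ∈ D, v ∈ e ∧ ∀ f ∈ D, v ∈ f → f = e) {x y : α} (p : G.Walk x y)
    (hp : p.IsPath) (hpD : ∀ e ∈ p.edges, e ∈ D) (v : α)
    (hv : v ∈ p.support) (hvA : v ∈ A) : v = x ∨ v = y := by
  by_contra hcon
  push Not at hcon
  obtain ⟨⟨e, he, hve, heM⟩, ⟨g, hg, hvg, hgM, -⟩⟩ :=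
      interior_edges p hp (alt_of_col hD p hp hpD) hv hcon.1 hcon.2
  obtain ⟨e', -, -, h⟩ := hA v hvA
  rw [h e (hpD e he) hve, ← h g (hpD g hg) hvg] at heM
  exact hgM heM

lemma exists_path [Fintype α] {D : Set (Sym2 α)} {A : Finset α} (hD : Col M D)
    (hDG : ∀ e ∈ D, e ∈ G.edgeSet)
    (hA : ∀ v ∈ A, ∃ e ∈ D, v ∈ e ∧ ∀ f ∈ D, v ∈ f → f = e)
    (hnA : ∀ v, v ∉ A → ∀ e ∈ D, v ∈ e → ∃ f ∈ D, v ∈ f ∧ (f ∈ M ↔ e ∉ M)) {x : α}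
    (hx : x ∈ A) :
    ∃ y, ∃ p : G.Walk x y, y ∈ A ∧ p.IsPath ∧ p.edges ≠ [] ∧ ∀ e ∈ p.edges, e ∈ D := by
  by_contra hcon
  have key : ∀ n : ℕ, ∃ y, ∃ p : G.Walk x y, p.IsPath ∧ p.edges ≠ [] ∧
      (∀ e ∈ p.edges, e ∈ D) ∧ n ≤ p.length := by
    intro n
    induction n with
    | zero =>
      obtain ⟨e, he, hxe, -⟩ := hA x hx
      obtain ⟨w, rfl⟩ := hxe
      have hadj : G.Adj x w := hDG _ he
      refine ⟨w, .cons hadj .nil, ?_, by simp, by simpa using he, by simp⟩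
      simp [hadj.ne]
    | succ n ih =>
      obtain ⟨y, p, hp, hpn, hpD, hl⟩ := ih
      have hy : y ∉ A := fun hy => hcon ⟨y, p, hy, hp, hpn, hpD⟩
      obtain ⟨e, -, he, hye, heu⟩ := last_edge p hp hpn
      obtain ⟨f, hf, hyf, hfM⟩ := hnA y hy e (hpD e he) hye
      have hfp : f ∉ p.edges := by
        intro hfp
        rw [heu f hfp hyf] at hfM
        tauto
      obtain ⟨z, rfl⟩ := hyf
      have hadj : G.Adj y z := hDG _ hf
      have hz : z ∉ p.support := fun hz =>
        hfp (edges_at hD hA p hp hpn hpD hx hz hadj.ne' hf (by simp))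
      refine ⟨z, p.concat hadj, hp.concat hz hadj, ?_, ?_, ?_⟩
      · simp [SimpleGraph.Walk.edges_concat]
      · intro e he
        simp only [SimpleGraph.Walk.edges_concat, List.concat_eq_append, List.mem_append, List.mem_singleton] at he
        rcases he with he | rfl
        · exact hpD e he
        · exact hf
      · simp; omega
  obtain ⟨y, p, hp, -, -, hl⟩ := key (Fintype.card α)
  exact absurd hp.length_lt (by omega)

/-- Union of the edges of a family. -/
def EF [DecidableEq α] (F : Finset (Σ x : α, Σ y : α, G.Walk x y)) : Finset (Sym2 α) :=
  F.biUnion fun p => p.2.2.edges.toFinset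

lemma mem_EF [DecidableEq α] {F : Finset (Σ x : α, Σ y : α, G.Walk x y)} {e : Sym2 α} :
    e ∈ EF F ↔ ∃ p ∈ F, e ∈ p.2.2.edges := by
  simp [EF]

lemma nest_notA {s A : Finset α} {F : Finset (Σ x : α, Σ y : α, G.Walk x y)}
    (hF : IsAltPathNest G s M A F) {p} (hp : p ∈ F) (v : α)
    (hv : v ∈ p.2.2.support) (hvA : v ∈ A) : v = p.1 ∨ v = p.2.1 := by
  obtain ⟨q, ⟨hq, hvq⟩, -⟩ := hF.2.2.2 v hvA
  have : p = q := by
    by_contra hne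
    refine hF.2.1 p hp q hq hne v hv ?_
    rcases hvq with h | h <;> rw [h] <;> simp
  subst this
  exact hvq

lemma nest_local [DecidableEq α] {s s' A : Finset α} {F : Finset (Σ x : α, Σ y : α, G.Walk x y)}
    (hM : IsPMOn G s M) (hF : IsAltPathNest G s M A F)
    (h1 : ∀ v ∈ A, (v ∈ s ↔ v ∉ s')) (h2 : ∀ v, v ∉ A → v ∈ s ∧ v ∈ s') (v : α) :
    (v ∈ s' → ∃! e, e ∈ symmDiff M (EF F) ∧ v ∈ e) ∧
    (v ∉ s' → ∀ e ∈ symmDiff M (EF F), v ∉ e) := by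
  simp only [Finset.mem_symmDiff]
  have hMu : ∀ e f, e ∈ M → f ∈ M → v ∈ e → v ∈ f → e = f := fun e f he hf hve hvf =>
    (hM.2 v ((hM.1 e he).2 v hve)).unique ⟨he, hve⟩ ⟨hf, hvf⟩
  have hMs : ∀ e ∈ M, v ∈ e → v ∈ s := fun e he hv => (hM.1 e he).2 v hv
  by_cases hsup : ∃ p ∈ F, v ∈ p.2.2.support
  · obtain ⟨p, hp, hv⟩ := hsup
    have hE : ∀ e, v ∈ e → (e ∈ EF F ↔ e ∈ p.2.2.edges) := by
      intro e hve
      rw [mem_EF]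
      refine ⟨?_, fun h => ⟨p, hp, h⟩⟩
      rintro ⟨q, hq, he⟩
      have : p = q := by
        by_contra hne
        exact hF.2.1 p hp q hq hne v hv (mem_supp he hve)
      subst this
      exact he
    obtain ⟨hpp, hpn, hpc, hph, hpl⟩ := hF.1 p hp
    by_cases hend : v = p.1 ∨ v = p.2.1
    · have hvA : v ∈ A := by
        rcases hend with h | h <;> rw [h]
        · exact (hF.2.2.1 p hp).1
        · exact (hF.2.2.1 p hp).2
      have : ∃ e ∈ p.2.2.edges, v ∈ e ∧ (e ∈ M ↔ v ∈ s) ∧ ∀ f ∈ p.2.2.edges, v ∈ f → f = e := by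
        rcases hend with h | h <;> rw [h]
        · obtain ⟨e, h1, h2, h3, h4⟩ := head_edge _ hpp hpn
          exact ⟨e, h2, h3, hph e h1, h4⟩
        · obtain ⟨e, h1, h2, h3, h4⟩ := last_edge _ hpp hpn
          exact ⟨e, h2, h3, hpl e h1, h4⟩
      obtain ⟨e, he, hve, heM, heu⟩ := this
      have h1v := h1 v hvA
      refine ⟨fun hs' => ?_, fun hs' f hf hvf => ?_⟩
      · refine ⟨e, ⟨Or.inr ⟨(hE e hve).2 he, by tauto⟩, hve⟩, ?_⟩
        rintro f ⟨⟨hfM, -⟩ | ⟨hfE, -⟩, hvf⟩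
        · have := hMs f hfM hvf; tauto
        · exact heu f ((hE f hvf).1 hfE) hvf
      · rcases hf with ⟨hfM, hfE⟩ | ⟨hfE, hfM⟩
        · have := hMu f e hfM (by tauto) hvf hve
          subst this
          exact hfE ((hE _ hve).2 he)
        · have := heu f ((hE f hvf).1 hfE) hvf
          subst this
          tauto
    · have hvA : v ∉ A := fun h => hend (nest_notA hF hp v hv h)
      push Not at hend
      refine ⟨fun _ => ?_, fun h => absurd (h2 v hvA).2 h⟩
      obtain ⟨⟨e, he, hve, heM⟩, ⟨g, hg, hvg, hgM, hgu⟩⟩ :=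
        interior_edges p.2.2 hpp hpc hv hend.1 hend.2
      refine ⟨g, ⟨Or.inr ⟨(hE g hvg).2 hg, hgM⟩, hvg⟩, ?_⟩
      rintro f ⟨⟨hfM, hfE⟩ | ⟨hfE, hfM⟩, hvf⟩
      · have := hMu f e hfM heM hvf hve
        subst this
        exact absurd ((hE _ hve).2 he) hfE
      · exact hgu f ((hE f hvf).1 hfE) hvf hfM
  · have hE : ∀ e, v ∈ e → e ∉ EF F := by
      intro e hve he
      obtain ⟨p, hp, hpe⟩ := mem_EF.1 he
      exact hsup ⟨p, hp, mem_supp hpe hve⟩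
    have hvA : v ∉ A := by
      intro hvA
      obtain ⟨p, ⟨hp, hvp⟩, -⟩ := hF.2.2.2 v hvA
      refine hsup ⟨p, hp, ?_⟩
      rcases hvp with h | h <;> rw [h] <;> simp
    refine ⟨fun _ => ?_, fun h => absurd (h2 v hvA).2 h⟩
    obtain ⟨e, ⟨he, hve⟩, hu⟩ := hM.2 v (h2 v hvA).1
    refine ⟨e, ⟨Or.inl ⟨he, hE e hve⟩, hve⟩, ?_⟩
    rintro f ⟨⟨hfM, hfE⟩ | ⟨hfE, hfM⟩, hvf⟩
    · exact hu f ⟨hfM, hvf⟩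
    · exact absurd hfE (hE f hvf)

lemma pm_of_nest [DecidableEq α] {s s' A : Finset α} {F : Finset (Σ x : α, Σ y : α, G.Walk x y)}
    (hM : IsPMOn G s M) (hF : IsAltPathNest G s M A F)
    (h1 : ∀ v ∈ A, (v ∈ s ↔ v ∉ s')) (h2 : ∀ v, v ∉ A → v ∈ s ∧ v ∈ s') :
    IsPMOn G s' (symmDiff M (EF F)) := by
  refine ⟨fun e he => ⟨?_, fun v hv => ?_⟩, fun v hv => (nest_local hM hF h1 h2 v).1 hv⟩
  · rw [Finset.mem_symmDiff] at he
    rcases he with ⟨h, -⟩ | ⟨h, -⟩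
    · exact (hM.1 e h).1
    · obtain ⟨p, hp, hpe⟩ := mem_EF.1 h
      exact SimpleGraph.Walk.edges_subset_edgeSet _ hpe
  · by_contra hvs
    exact (nest_local hM hF h1 h2 v).2 hvs e he hv

lemma col_of_pm [DecidableEq α] {s s' : Finset α} {N : Finset (Sym2 α)} (hM : IsPMOn G s M)
    (hN : IsPMOn G s' N) : Col M {e | e ∈ symmDiff M N} := by
  intro v e f he hf hve hvf hef
  simp only [Set.mem_setOf_eq, Finset.mem_symmDiff] at he hf
  by_cases heM : e ∈ M
  · exact (hM.2 v ((hM.1 e heM).2 v hve)).unique ⟨heM, hve⟩ ⟨hef.1 heM, hvf⟩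
  · have heN : e ∈ N := by tauto
    have hfN : f ∈ N := by tauto
    exact (hN.2 v ((hN.1 e heN).2 v hve)).unique ⟨heN, hve⟩ ⟨hfN, hvf⟩

lemma nest_subset [DecidableEq α] {s s' : Finset α} {n : ℕ} {a : Fin n → α}
    (ha : Function.Injective a) {A : Finset α}
    {F F' : Finset (Σ x : α, Σ y : α, G.Walk x y)}
    (hM : IsPMOn G s M) (hF : IsAltPathNest G s M A F) (hF' : IsAltPathNest G s M A F')
    (hFo : ∀ p ∈ F, ∃ i j : Fin n, i < j ∧ p.1 = a i ∧ p.2.1 = a j)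
    (hFo' : ∀ p ∈ F', ∃ i j : Fin n, i < j ∧ p.1 = a i ∧ p.2.1 = a j)
    (h1 : ∀ v ∈ A, (v ∈ s ↔ v ∉ s')) (h2 : ∀ v, v ∉ A → v ∈ s ∧ v ∈ s')
    (hE : EF F = EF F') : F ⊆ F' := by
  intro p hp
  have hcol := col_of_pm hM (pm_of_nest hM hF h1 h2)
  rw [symmDiff_symmDiff_cancel_left] at hcol
  obtain ⟨q, ⟨hq, hpq⟩, -⟩ := hF'.2.2.2 p.1 (hF.2.2.1 p hp).1
  have hpA := nest_notA hF hp
  have hqA := nest_notA hF' hq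
  have hpE : ∀ e ∈ p.2.2.edges, e ∈ {e | e ∈ EF F} := fun e he => mem_EF.2 ⟨p, hp, he⟩
  have hqE : ∀ e ∈ q.2.2.edges, e ∈ {e | e ∈ EF F} := fun e he => by
    rw [hE]; exact mem_EF.2 ⟨q, hq, he⟩
  have hpalt := hF.1 p hp
  have hqalt := hF'.1 q hq
  have hpe := hF.2.2.1 p hp
  have hqe := hF'.2.2.1 q hq
  have hpo := hFo p hp
  have hqo := hFo' q hq
  obtain ⟨x, y, P⟩ := p
  obtain ⟨x', y', Q⟩ := q
  simp only at *
  rcases hpq with rfl | rfl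
  · have := det hcol P Q hpalt.1 hqalt.1 hpE hqE hpalt.2.1 hqalt.2.1 hpA hqA hpe.2 hqe.2
      (fun e he f hf => (hpalt.2.2.2.1 e he).trans (hqalt.2.2.2.1 f hf).symm)
    rw [this]; exact hq
  · exfalso
    have := det hcol P Q.reverse hpalt.1 hqalt.1.reverse hpE (by simpa using hqE) hpalt.2.1
      (by simpa using hqalt.2.1) hpA (fun v hv hA => (hqA v (by simpa using hv) hA).symm) hpe.2 hqe.1
      (fun e he f hf => (hpalt.2.2.2.1 e he).trans (hqalt.2.2.2.2 f (by simpa using hf)).symm)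
    have hy : y = x' := congrArg Sigma.fst this
    subst hy
    obtain ⟨i, j, hij, e1, e2⟩ := hpo
    obtain ⟨k, l, hkl, e3, e4⟩ := hqo
    have := ha (e1.symm.trans e4)
    have := ha (e2.symm.trans e3)
    omega

lemma exists_nest [Fintype α] [DecidableEq α] {s s' : Finset α} {n : ℕ} {a : Fin n → α}
    (ha : Function.Injective a) {N : Finset (Sym2 α)}
    (hM : IsPMOn G s M) (hN : IsPMOn G s' N)
    (h1 : ∀ v ∈ Finset.univ.image a, (v ∈ s ↔ v ∉ s'))
    (h2 : ∀ v, v ∉ Finset.univ.image a → v ∈ s ∧ v ∈ s') :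
    ∃ F : Finset (Σ x : α, Σ y : α, G.Walk x y),
      IsAltPathNest G s M (Finset.univ.image a) F ∧
      IsAltPathNest G s' N (Finset.univ.image a) F ∧
      ∀ p ∈ F, ∃ i j : Fin n, i < j ∧ p.1 = a i ∧ p.2.1 = a j := by
  set A := Finset.univ.image a with hAdef
  have hD := col_of_pm hM hN
  have hD' := col_of_pm hN hM
  rw [symmDiff_comm] at hD'
  set D : Set (Sym2 α) := {e | e ∈ symmDiff M N} with hDdef
  have memD : ∀ e, e ∈ D ↔ (e ∈ M ∧ e ∉ N ∨ e ∈ N ∧ e ∉ M) := fun e => Finset.mem_symmDiff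
  have hMs : ∀ e ∈ M, ∀ v ∈ e, v ∈ s := fun e he v hv => (hM.1 e he).2 v hv
  have hNs : ∀ e ∈ N, ∀ v ∈ e, v ∈ s' := fun e he v hv => (hN.1 e he).2 v hv
  have hDG : ∀ e ∈ D, e ∈ G.edgeSet := by
    intro e he
    rcases (memD e).1 he with ⟨h, -⟩ | ⟨h, -⟩
    · exact (hM.1 e h).1
    · exact (hN.1 e h).1
  have hAs : ∀ v ∈ A, ∀ e ∈ D, v ∈ e → (e ∈ M ↔ v ∈ s) ∧ (e ∈ N ↔ v ∈ s') := by
    intro v hv e he hve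
    have := (memD e).1 he
    have := h1 v hv
    have := fun h => hMs e h v hve
    have := fun h => hNs e h v hve
    tauto
  have hA : ∀ v ∈ A, ∃ e ∈ D, v ∈ e ∧ ∀ f ∈ D, v ∈ f → f = e := by
    intro v hv
    have : ∃ e ∈ D, v ∈ e := by
      by_cases hvs : v ∈ s
      · obtain ⟨e, ⟨he, hve⟩, -⟩ := hM.2 v hvs
        refine ⟨e, (memD e).2 (Or.inl ⟨he, fun h => ?_⟩), hve⟩
        exact (h1 v hv).1 hvs (hNs e h v hve)
      · obtain ⟨e, ⟨he, hve⟩, -⟩ := hN.2 v (by have := h1 v hv; tauto)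
        exact ⟨e, (memD e).2 (Or.inr ⟨he, fun h => hvs (hMs e h v hve)⟩), hve⟩
    obtain ⟨e, he, hve⟩ := this
    exact ⟨e, he, hve, fun f hf hvf => hD v f e hf he hvf hve
      ((hAs v hv f hf hvf).1.trans (hAs v hv e he hve).1.symm)⟩
  have hnA : ∀ v, v ∉ A → ∀ e ∈ D, v ∈ e → ∃ f ∈ D, v ∈ f ∧ (f ∈ M ↔ e ∉ M) := by
    intro v hv e he hve
    obtain ⟨f, ⟨hf, hvf⟩, hfu⟩ := hM.2 v (h2 v hv).1
    obtain ⟨g, ⟨hg, hvg⟩, hgu⟩ := hN.2 v (h2 v hv).2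
    rcases (memD e).1 he with ⟨h, h'⟩ | ⟨h, h'⟩
    · have := hfu e ⟨h, hve⟩
      subst this
      have hgM : g ∉ M := by
        intro hgM
        rw [hfu g ⟨hgM, hvg⟩] at hg
        exact h' hg
      exact ⟨g, (memD g).2 (Or.inr ⟨hg, hgM⟩), hvg, by tauto⟩
    · have := hgu e ⟨h, hve⟩
      subst this
      have hfN : f ∉ N := by
        intro hfN
        rw [hgu f ⟨hfN, hvf⟩] at hf
        exact h' hf
      exact ⟨f, (memD f).2 (Or.inl ⟨hf, hfN⟩), hvf, by tauto⟩
  let S : Set (Σ x : α, Σ y : α, G.Walk x y) := {p | p.2.2.IsPath ∧ p.2.2.edges ≠ [] ∧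
    (∀ e ∈ p.2.2.edges, e ∈ D) ∧ ∃ i j : Fin n, i < j ∧ p.1 = a i ∧ p.2.1 = a j}
  have hSA : ∀ p ∈ S, p.1 ∈ A ∧ p.2.1 ∈ A := by
    rintro p ⟨-, -, -, i, j, -, h, h'⟩
    exact ⟨Finset.mem_image.2 ⟨i, Finset.mem_univ _, h.symm⟩,
      Finset.mem_image.2 ⟨j, Finset.mem_univ _, h'.symm⟩⟩
  have hSeq : ∀ p ∈ S, ∀ q ∈ S, p.1 = q.1 ∨ p.1 = q.2.1 → p = q := by
    intro p hp q hq hpq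
    have hpe := hSA p hp
    have hqe := hSA q hq
    obtain ⟨x, y, P⟩ := p
    obtain ⟨x', y', Q⟩ := q
    obtain ⟨hpp, hpn, hpD, i, j, hij, e1, e2⟩ := hp
    obtain ⟨hqp, hqn, hqD, k, l, hkl, e3, e4⟩ := hq
    simp only at *
    rcases hpq with rfl | rfl
    · have := det hD P Q hpp hqp hpD hqD hpn hqn (int_notA hD hA P hpp hpD)
        (int_notA hD hA Q hqp hqD) hpe.2 hqe.2 (fun e he f hf => by
          obtain ⟨e', he', h1, h2, -⟩ := head_edge P hpp hpn
          obtain rfl := Option.mem_unique he' he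
          obtain ⟨f', hf', h3, h4, -⟩ := head_edge Q hqp hqn
          obtain rfl := Option.mem_unique hf' hf
          exact (hAs _ hpe.1 _ (hpD _ h1) h2).1.trans (hAs _ hpe.1 _ (hqD _ h3) h4).1.symm)
      rw [this]
    · exfalso
      have hqD' : ∀ e ∈ Q.reverse.edges, e ∈ D := by simpa using hqD
      have hqn' : Q.reverse.edges ≠ [] := by simpa using hqn
      have := det hD P Q.reverse hpp hqp.reverse hpD hqD' hpn hqn' (int_notA hD hA P hpp hpD)
        (int_notA hD hA Q.reverse hqp.reverse hqD') hpe.2 hqe.1 (fun e he f hf => by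
          obtain ⟨e', he', h1, h2, -⟩ := head_edge P hpp hpn
          obtain rfl := Option.mem_unique he' he
          obtain ⟨f', hf', h3, h4, -⟩ := head_edge Q.reverse hqp.reverse hqn'
          obtain rfl := Option.mem_unique hf' hf
          exact (hAs _ hpe.1 _ (hpD _ h1) h2).1.trans (hAs _ hpe.1 _ (hqD' _ h3) h4).1.symm)
      have hy : y = x' := congrArg Sigma.fst this
      subst hy
      have := ha (e1.symm.trans e4)
      have := ha (e2.symm.trans e3)
      omega
  have hSdisj : ∀ p ∈ S, ∀ q ∈ S, p ≠ q → ∀ u ∈ p.2.2.support, u ∉ q.2.2.support := by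
    intro p hp q hq hne u hup huq
    refine hne (hSeq p hp q hq ?_)
    obtain ⟨hpp, hpn, hpD, -⟩ := id hp
    obtain ⟨hqp, hqn, hqD, -⟩ := id hq
    have hmem : p.1 ∈ {v | v ∈ q.2.2.support} := by
      refine walk_closed p.2.2 hup huq ?_
      intro e he v hve hv w hwe
      exact mem_supp (edges_at' hD hA q.2.2 hqp hqn hqD (hSA q hq).1 (hSA q hq).2 hv
        (hpD e he) hve) hwe
    exact int_notA hD hA q.2.2 hqp hqD p.1 hmem (hSA p hp).1
  have hfin : S.Finite := by
    refine Set.Finite.of_injOn (f := fun p => p.1) (t := Set.univ) (fun _ _ => Set.mem_univ _) ?_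
      Set.finite_univ
    intro p hp q hq h
    exact hSeq p hp q hq (Or.inl h)
  have hex : ∀ v ∈ A, ∃! p, p ∈ hfin.toFinset ∧ (v = p.1 ∨ v = p.2.1) := by
    intro v hv
    have : ∃ p ∈ S, (v = p.1 ∨ v = p.2.1) := by
      obtain ⟨y, p, hy, hp, hpn, hpD⟩ := exists_path hD hDG hA hnA hv
      obtain ⟨i, -, rfl⟩ := Finset.mem_image.1 hv
      obtain ⟨j, -, rfl⟩ := Finset.mem_image.1 hy
      rcases lt_trichotomy i j with h | h | h
      · exact ⟨⟨_, _, p⟩, ⟨hp, hpn, hpD, i, j, h, rfl, rfl⟩, Or.inl rfl⟩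
      · subst h
        rw [SimpleGraph.Walk.isPath_iff_nil, SimpleGraph.Walk.nil_iff_eq_nil] at hp
        subst hp
        simp at hpn
      · exact ⟨⟨_, _, p.reverse⟩, ⟨hp.reverse, by simpa using hpn, by simpa using hpD,
          j, i, h, rfl, rfl⟩, Or.inr rfl⟩
    obtain ⟨p, hp, hvp⟩ := this
    refine ⟨p, ⟨by simpa using hp, hvp⟩, ?_⟩
    rintro q ⟨hq, hvq⟩
    by_contra hne
    refine hSdisj q (by simpa using hq) p hp hne v ?_ ?_
    · rcases hvq with h | h <;> rw [h] <;> simp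
    · rcases hvp with h | h <;> rw [h] <;> simp
  refine ⟨hfin.toFinset, ⟨?_, by simpa only [Set.Finite.mem_toFinset] using hSdisj,
    by simpa only [Set.Finite.mem_toFinset] using hSA, hex⟩,
    ⟨?_, by simpa only [Set.Finite.mem_toFinset] using hSdisj,
    by simpa only [Set.Finite.mem_toFinset] using hSA, hex⟩, ?_⟩
  · intro p hp
    rw [Set.Finite.mem_toFinset] at hp
    obtain ⟨hpp, hpn, hpD, -⟩ := id hp
    refine ⟨hpp, hpn, alt_of_col hD _ hpp hpD, ?_, ?_⟩
    · intro e he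
      obtain ⟨e', he', h1, h2, -⟩ := head_edge p.2.2 hpp hpn
      obtain rfl := Option.mem_unique he' he
      exact (hAs _ (hSA p hp).1 _ (hpD _ h1) h2).1
    · intro e he
      obtain ⟨e', he', h1, h2, -⟩ := last_edge p.2.2 hpp hpn
      obtain rfl := Option.mem_unique he' he
      exact (hAs _ (hSA p hp).2 _ (hpD _ h1) h2).1
  · intro p hp
    rw [Set.Finite.mem_toFinset] at hp
    obtain ⟨hpp, hpn, hpD, -⟩ := id hp
    refine ⟨hpp, hpn, alt_of_col hD' _ hpp hpD, ?_, ?_⟩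
    · intro e he
      obtain ⟨e', he', h1, h2, -⟩ := head_edge p.2.2 hpp hpn
      obtain rfl := Option.mem_unique he' he
      exact (hAs _ (hSA p hp).1 _ (hpD _ h1) h2).2
    · intro e he
      obtain ⟨e', he', h1, h2, -⟩ := last_edge p.2.2 hpp hpn
      obtain rfl := Option.mem_unique he' he
      exact (hAs _ (hSA p hp).2 _ (hpD _ h1) h2).2
  · intro p hp
    rw [Set.Finite.mem_toFinset] at hp
    exact hp.2.2.2

end AltNest

/-- (Lemma 3.3.) If `A = {a 0, …, a (n-1)}` is partitioned into `AK` and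
`AH`, and `H = G − AK` has a unique perfect matching `MH`, then the number of perfect
matchings of `K = G − AH` equals the number of families of pairwise vertex-disjoint
`MH`-alternating paths in `G` whose set of path-endpoints is exactly `A` (each vertex of
`A` being an endpoint of exactly one path of the family; each path of the family is
recorded once, oriented from its endpoint of smaller index to that of larger index). -/
theorem pmCount_eq_card_nests {α : Type*} [Fintype α] [DecidableEq α]
    (G : SimpleGraph α) (n : ℕ) (a : Fin n → α) (ha : Function.Injective a)
    (AK AH : Finset α) (hpart : AK ∪ AH = Finset.univ.image a) (hdisj : Disjoint AK AH)
    (MH : Finset (Sym2 α))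
    (hMH : IsPMOn G (Finset.univ \ AK) MH)
    (huniq : ∀ m, IsPMOn G (Finset.univ \ AK) m → m = MH) :
    pmCount G (Finset.univ \ AH) =
      Nat.card {F : Finset (Σ x : α, Σ y : α, G.Walk x y) //
        IsAltPathNest G (Finset.univ \ AK) MH (Finset.univ.image a) F ∧
        ∀ p ∈ F, ∃ i j : Fin n, i < j ∧ p.1 = a i ∧ p.2.1 = a j} := by
  classical
  have h1 : ∀ v ∈ Finset.univ.image a, (v ∈ Finset.univ \ AK ↔ v ∉ Finset.univ \ AH) := by
    intro v hv
    rw [← hpart, Finset.mem_union] at hv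
    have : v ∈ AK → v ∉ AH := fun h h' => (Finset.disjoint_left.1 hdisj) h h'
    simp only [Finset.mem_sdiff, Finset.mem_univ, true_and]
    tauto
  have h2 : ∀ v, v ∉ Finset.univ.image a → v ∈ Finset.univ \ AK ∧ v ∈ Finset.univ \ AH := by
    intro v hv
    rw [← hpart, Finset.mem_union] at hv
    simp only [Finset.mem_sdiff, Finset.mem_univ, true_and]
    tauto
  have h1' : ∀ v ∈ Finset.univ.image a, (v ∈ Finset.univ \ AH ↔ v ∉ Finset.univ \ AK) := by
    intro v hv
    have := h1 v hv
    tauto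
  rw [pmCount]
  symm
  refine Nat.card_eq_of_bijective
    (fun F => ⟨symmDiff MH (AltNest.EF F.1), AltNest.pm_of_nest hMH F.2.1 h1 h2⟩) ⟨?_, ?_⟩
  · rintro ⟨F, hF, hFo⟩ ⟨F', hF', hFo'⟩ h
    have hE : AltNest.EF F = AltNest.EF F' := symmDiff_right_injective MH (congrArg Subtype.val h)
    exact Subtype.ext (Finset.Subset.antisymm
      (AltNest.nest_subset ha hMH hF hF' hFo hFo' h1 h2 hE)
      (AltNest.nest_subset ha hMH hF' hF hFo' hFo h1 h2 hE.symm))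
  · rintro ⟨N, hN⟩
    obtain ⟨F, hF, hF', hFo⟩ := AltNest.exists_nest ha hMH hN h1 h2
    refine ⟨⟨F, hF, hFo⟩, Subtype.ext ?_⟩
    have := huniq _ (AltNest.pm_of_nest hN hF' h1' (fun v hv => (h2 v hv).symm))
    simp only
    rw [← this, symmDiff_symmDiff_cancel_right]
end
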